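/- arXiv:1511.08041 — 3 statements merged into one kernel-verified Lean document; each statement's English description precedes it below -/
import Mathlib

section
/- Let m be a positive integer, n ≥ 1, a ∈ ℝⁿ a unit vector, and λ > 0. Then for every ξ ∈ ℝⁿ, the symbol P_λ(ξ) = (|ξ|² - λ² + 2iλ a·ξ)^m satisfies Re P_λ(ξ) ≥ - b_m λ^{2m}. -/
open Real

/-- The constant `b_m = (sin(π/(4m-2)))^{-(2m-1)}`. -/
noncomputable def bConst (m : ℕ) : ℝ :=
  (Real.sin (Real.pi / (4 * (m : ℝ) - 2)))⁻¹ ^ (2 * m - 1)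

/-- The symbol `P_λ(ξ) = (|ξ|² - λ² + 2iλ a·ξ)^m` of the conjugated operator
`e^{-λ a·x}(-Δ)^m e^{λ a·x}`. -/
noncomputable def Psymb (n m : ℕ) (a : EuclideanSpace ℝ (Fin n)) (lam : ℝ)
    (ξ : EuclideanSpace ℝ (Fin n)) : ℂ :=
  (((‖ξ‖ ^ 2 - lam ^ 2 : ℝ) : ℂ) + ((2 * lam * (inner ℝ a ξ : ℝ) : ℝ) : ℂ) * Complex.I) ^ m

/-!
Every `w : ℂ` satisfies `‖w²‖ - Re w² = 2 (Im w)²`, so the parabolic region `‖z‖ ≤ Re z + 2λ²`,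
which contains `|ξ|² - λ² + 2iλ a·ξ`, consists of the squares of the `w` with `|Im w| ≤ λ`. It
therefore suffices that `Re (w ^ (2m)) ≥ -b_m (Im w) ^ (2m)` for all `w`. For `w` of argument
`θ ∈ (0, π/2]` and `k = 2m - 1`, this bounds `cos ((k + 1) θ) / sin θ ^ (k + 1)` from below. This
quotient is positive for small `θ` and at least `-1` at `π/2`; its derivative is a multiple of
`cos (k θ)`, and where `cos (k θ)` vanishes one has `|cos ((k + 1) θ)| ≤ sin θ` and `θ ≥ π / (2k)`,
so its value there is at least `-1 / sin (π / (2k)) ^ k = -b_m`.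
-/

lemma pi_div_two_le_of_cos_eq_zero {θ : ℝ} (hθ : 0 ≤ θ) (hcos : cos θ = 0) : π / 2 ≤ θ := by
  by_contra! hlt
  exact (cos_pos_of_mem_Ioo ⟨by linarith [pi_pos], hlt⟩).ne' hcos

lemma abs_cos_add_le_abs_sin {x y : ℝ} (hx : cos x = 0) : |cos (x + y)| ≤ |sin y| := by
  rw [cos_add, hx, zero_mul, zero_sub, abs_neg, abs_mul]
  exact mul_le_of_le_one_left (abs_nonneg _) (abs_sin_le_one x)

lemma sin_pos_of_pos_of_le_pi_div_two {θ : ℝ} (hθ : 0 < θ) (hθ' : θ ≤ π / 2) : 0 < sin θ :=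
  sin_pos_of_pos_of_lt_pi hθ (by linarith [pi_pos])

lemma sin_pi_div_two_mul_pos {k : ℕ} (hk : 0 < k) : 0 < sin (π / (2 * k)) := by
  have hk' : (1 : ℝ) ≤ k := by exact_mod_cast hk
  refine sin_pos_of_pos_of_lt_pi (by positivity) (div_lt_self pi_pos ?_)
  linarith

/-- The quotient `cos ((k + 1) θ) / sin θ ^ (k + 1)`, which is `Re (w ^ (k + 1)) / (Im w) ^ (k + 1)`
for `w : ℂ` of argument `θ`. At the zeros of `sin` it has the junk value `0`. -/
noncomputable def cosDivSinPow (k : ℕ) (θ : ℝ) : ℝ :=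
  cos ((k + 1) * θ) / sin θ ^ (k + 1)

section CosDivSinPow

variable {k : ℕ} {θ : ℝ}

lemma hasDerivAt_cosDivSinPow (hθ : sin θ ≠ 0) :
    HasDerivAt (cosDivSinPow k) (-(k + 1) * cos (k * θ) / sin θ ^ (k + 2)) θ := by
  have hcos : HasDerivAt (fun x : ℝ => cos ((k + 1) * x))
      (-sin ((k + 1) * θ) * ((k + 1) * 1)) θ :=
    ((hasDerivAt_id θ).const_mul (k + 1 : ℝ)).cos
  have hsin := (hasDerivAt_sin θ).pow (k + 1)
  have hexpand : cos (k * θ) = cos ((k + 1) * θ) * cos θ + sin ((k + 1) * θ) * sin θ := by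
    rw [← cos_sub]
    congr 1
    ring
  refine (hcos.div hsin (pow_ne_zero _ hθ)).congr_deriv ?_
  rw [hexpand]
  simp only [Pi.pow_apply, Nat.add_sub_cancel]
  push_cast
  field_simp
  ring

lemma cos_mul_eq_zero_of_isLocalExtr_cosDivSinPow (hθ : sin θ ≠ 0)
    (hextr : IsLocalExtr (cosDivSinPow k) θ) : cos (k * θ) = 0 := by
  have hderiv := hextr.hasDerivAt_eq_zero (hasDerivAt_cosDivSinPow hθ)
  have hnum := (div_eq_zero_iff.1 hderiv).resolve_right (pow_ne_zero _ hθ)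
  exact (mul_eq_zero.1 hnum).resolve_left (neg_ne_zero.2 (by positivity))

lemma cosDivSinPow_nonneg (hθ : 0 ≤ θ) (hmul : (k + 1) * θ ≤ π / 2) : 0 ≤ cosDivSinPow k θ := by
  have hmul_nonneg : 0 ≤ (k + 1) * θ := by positivity
  have hle : θ ≤ (k + 1) * θ := le_mul_of_one_le_left hθ (by simp)
  have hsin := sin_nonneg_of_nonneg_of_le_pi hθ (by linarith [pi_pos])
  have hcos := cos_nonneg_of_neg_pi_div_two_le_of_le (by linarith [pi_pos]) hmul
  exact div_nonneg hcos (pow_nonneg hsin _)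

lemma neg_one_le_cosDivSinPow_pi_div_two : -1 ≤ cosDivSinPow k (π / 2) := by
  rw [cosDivSinPow, sin_pi_div_two, one_pow, div_one]
  exact neg_one_le_cos _

lemma neg_inv_sin_pow_le_cosDivSinPow_of_cos_mul_eq_zero (hk : 0 < k) (hθ : 0 < θ)
    (hθ' : θ ≤ π / 2) (hcos : cos (k * θ) = 0) :
    -(sin (π / (2 * k)))⁻¹ ^ k ≤ cosDivSinPow k θ := by
  have hk' : (0 : ℝ) < k := by exact_mod_cast hk
  have hsin := sin_pos_of_pos_of_le_pi_div_two hθ hθ'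
  have hle : π / (2 * k) ≤ θ := by
    rw [← div_div, div_le_iff₀' hk']
    exact pi_div_two_le_of_cos_eq_zero (by positivity) hcos
  have hsin_le : sin (π / (2 * k)) ≤ sin θ :=
    sin_le_sin_of_le_of_le_pi_div_two
      (by linarith [pi_pos, show 0 < π / (2 * k) by positivity]) hθ' hle
  have hnum : -sin θ ≤ cos ((k + 1) * θ) := by
    rw [add_one_mul]
    exact neg_le_of_abs_le ((abs_cos_add_le_abs_sin hcos).trans_eq (abs_of_pos hsin))
  calc -(sin (π / (2 * k)))⁻¹ ^ k
      ≤ -(sin θ)⁻¹ ^ k := by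
        have := sin_pi_div_two_mul_pos hk
        gcongr
    _ = -sin θ / sin θ ^ (k + 1) := by
        rw [inv_pow, pow_succ]
        field_simp
    _ ≤ cosDivSinPow k θ := by
        unfold cosDivSinPow
        gcongr

lemma neg_inv_sin_pow_le_cosDivSinPow (hk : 0 < k) (hθ : 0 < θ) (hθ' : θ ≤ π / 2) :
    -(sin (π / (2 * k)))⁻¹ ^ k ≤ cosDivSinPow k θ := by
  have ht := sin_pi_div_two_mul_pos hk
  -- The quotient is nonnegative on `(0, π / 2 / (k + 1)]`, so the endpoint `δ` is harmless.
  set δ := min θ (π / 2 / (k + 1))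
  have hδ : 0 < δ := by positivity
  have hsin {x : ℝ} (hx : x ∈ Set.Icc δ (π / 2)) : sin x ≠ 0 :=
    (sin_pos_of_pos_of_le_pi_div_two (hδ.trans_le hx.1) hx.2).ne'
  have hcont : ContinuousOn (cosDivSinPow k) (Set.Icc δ (π / 2)) := fun x hx =>
    (hasDerivAt_cosDivSinPow (hsin hx)).continuousAt.continuousWithinAt
  have hθ_mem : θ ∈ Set.Icc δ (π / 2) := ⟨min_le_left _ _, hθ'⟩
  obtain ⟨x, hx, hmin⟩ := isCompact_Icc.exists_isMinOn ⟨θ, hθ_mem⟩ hcont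
  refine le_trans ?_ (hmin hθ_mem)
  rcases hx.1.eq_or_lt with rfl | hleft
  · have hmul : (k + 1) * δ ≤ π / 2 := (le_div_iff₀' (by positivity)).1 (min_le_right _ _)
    exact (neg_nonpos.2 (by positivity)).trans (cosDivSinPow_nonneg hδ.le hmul)
  rcases hx.2.eq_or_lt with rfl | hright
  · have hone : 1 ≤ (sin (π / (2 * k)))⁻¹ ^ k :=
      one_le_pow₀ ((one_le_inv₀ ht).2 (sin_le_one _))
    exact (neg_le_neg hone).trans neg_one_le_cosDivSinPow_pi_div_two
  · have hcrit := cos_mul_eq_zero_of_isLocalExtr_cosDivSinPow (hsin hx)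
      (hmin.isLocalMin (Icc_mem_nhds hleft hright)).isExtr
    exact neg_inv_sin_pow_le_cosDivSinPow_of_cos_mul_eq_zero hk (hδ.trans_le hx.1) hx.2 hcrit

lemma neg_inv_sin_pow_mul_sin_pow_le_cos (hk : 0 < k) (hθ : 0 ≤ θ) (hθ' : θ ≤ π / 2) :
    -(sin (π / (2 * k)))⁻¹ ^ k * sin θ ^ (k + 1) ≤ cos ((k + 1) * θ) := by
  rcases hθ.eq_or_lt with rfl | hθ
  · simp
  · have hsin := sin_pos_of_pos_of_le_pi_div_two hθ hθ'
    exact (le_div_iff₀ (by positivity)).1 (neg_inv_sin_pow_le_cosDivSinPow hk hθ hθ')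

end CosDivSinPow

lemma re_pow_eq_norm_pow_mul_cos (w : ℂ) (n : ℕ) :
    (w ^ n).re = ‖w‖ ^ n * cos (n * |w.arg|) := by
  have habs : cos (n * |w.arg|) = cos (n * w.arg) := by
    rw [← cos_abs (n * w.arg), abs_mul, Nat.abs_cast]
  conv_lhs => rw [← Complex.norm_mul_exp_arg_mul_I w]
  rw [habs, mul_pow, ← Complex.exp_nat_mul, ← mul_assoc, ← Complex.ofReal_pow,
    Complex.re_ofReal_mul]
  exact_mod_cast congrArg _ (Complex.exp_ofReal_mul_I_re (n * w.arg))

lemma neg_inv_sin_pow_mul_abs_im_pow_le_re_pow {k : ℕ} (hk : 0 < k) {w : ℂ} (hw : 0 ≤ w.re) :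
    -(sin (π / (2 * k)))⁻¹ ^ k * |w.im| ^ (k + 1) ≤ (w ^ (k + 1)).re := by
  have him : |w.im| = ‖w‖ * sin |w.arg| := by
    rw [← Complex.norm_mul_sin_arg, abs_mul, abs_norm,
      abs_sin_eq_sin_abs_of_abs_le_pi (Complex.abs_arg_le_pi w)]
  have htrig := neg_inv_sin_pow_mul_sin_pow_le_cos hk (abs_nonneg w.arg)
    (Complex.abs_arg_le_pi_div_two_iff.2 hw)
  calc -(sin (π / (2 * k)))⁻¹ ^ k * |w.im| ^ (k + 1)
      = ‖w‖ ^ (k + 1) * (-(sin (π / (2 * k)))⁻¹ ^ k * sin |w.arg| ^ (k + 1)) := by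
        rw [him, mul_pow]
        ring
    _ ≤ ‖w‖ ^ (k + 1) * cos ((k + 1) * |w.arg|) := by gcongr
    _ = (w ^ (k + 1)).re := by rw [re_pow_eq_norm_pow_mul_cos, Nat.cast_add_one]

lemma bConst_succ (k : ℕ) :
    bConst (k + 1) = (sin (π / (2 * (2 * k + 1 : ℕ))))⁻¹ ^ (2 * k + 1) := by
  unfold bConst
  congr 4
  push_cast
  ring

lemma bConst_pos {m : ℕ} (hm : 1 ≤ m) : 0 < bConst m := by
  obtain ⟨k, rfl⟩ := Nat.exists_eq_add_of_le' hm
  rw [bConst_succ]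
  exact pow_pos (inv_pos.2 (sin_pi_div_two_mul_pos (Nat.succ_pos _))) _

lemma neg_bConst_mul_im_pow_le_re_pow {m : ℕ} (hm : 1 ≤ m) (w : ℂ) :
    -bConst m * w.im ^ (2 * m) ≤ (w ^ (2 * m)).re := by
  obtain ⟨k, rfl⟩ := Nat.exists_eq_add_of_le' hm
  wlog hw : 0 ≤ w.re generalizing w
  · have hneg := this (-w) (by simpa using (not_le.1 hw).le)
    have heven : Even (2 * (k + 1)) := even_two_mul _
    rwa [Complex.neg_im, heven.neg_pow, heven.neg_pow] at hneg
  · rw [bConst_succ, ← (even_two_mul (k + 1)).pow_abs]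
    exact neg_inv_sin_pow_mul_abs_im_pow_le_re_pow (Nat.succ_pos _) hw

lemma norm_sq_sub_re_sq (w : ℂ) : ‖w ^ 2‖ - (w ^ 2).re = 2 * w.im ^ 2 := by
  rw [norm_pow, Complex.sq_norm, Complex.normSq_apply, pow_two w, Complex.mul_re]
  ring

lemma neg_bConst_mul_pow_le_re_pow_of_norm_le {m : ℕ} (hm : 1 ≤ m) {z : ℂ} {r : ℝ}
    (hz : ‖z‖ ≤ z.re + 2 * r ^ 2) : -bConst m * r ^ (2 * m) ≤ (z ^ m).re := by
  obtain ⟨w, rfl⟩ := IsAlgClosed.exists_pow_nat_eq z two_pos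
  have him : w.im ^ 2 ≤ r ^ 2 := by linarith [norm_sq_sub_re_sq w]
  have hb := bConst_pos hm
  calc -bConst m * r ^ (2 * m)
      ≤ -bConst m * w.im ^ (2 * m) := by
        rw [pow_mul, pow_mul, neg_mul, neg_mul]
        gcongr
    _ ≤ ((w ^ 2) ^ m).re := by
        rw [← pow_mul]
        exact neg_bConst_mul_im_pow_le_re_pow hm w

section InnerProductSpace

variable {E : Type*} [SeminormedAddCommGroup E] [InnerProductSpace ℝ E] {a : E}

lemma norm_symbol_le (ha : ‖a‖ ≤ 1) (r : ℝ) (ξ : E) :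
    ‖((‖ξ‖ ^ 2 - r ^ 2 : ℝ) : ℂ) + ((2 * r * inner ℝ a ξ : ℝ) : ℂ) * Complex.I‖ ≤
      ‖ξ‖ ^ 2 + r ^ 2 := by
  have hinner : inner ℝ a ξ ^ 2 ≤ ‖ξ‖ ^ 2 := sq_le_sq.2 <|
    calc |inner ℝ a ξ| ≤ ‖a‖ * ‖ξ‖ := abs_real_inner_le_norm a ξ
      _ ≤ 1 * ‖ξ‖ := by gcongr
      _ = |‖ξ‖| := by rw [one_mul, abs_norm]
  rw [Complex.norm_add_mul_I]
  refine sqrt_le_iff.2 ⟨by positivity, ?_⟩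
  calc (‖ξ‖ ^ 2 - r ^ 2) ^ 2 + (2 * r * inner ℝ a ξ) ^ 2
      = (‖ξ‖ ^ 2 - r ^ 2) ^ 2 + 4 * r ^ 2 * inner ℝ a ξ ^ 2 := by ring
    _ ≤ (‖ξ‖ ^ 2 - r ^ 2) ^ 2 + 4 * r ^ 2 * ‖ξ‖ ^ 2 := by gcongr
    _ = (‖ξ‖ ^ 2 + r ^ 2) ^ 2 := by ring

theorem re_symbol_lower_bound_general {m : ℕ} (hm : 1 ≤ m) (ha : ‖a‖ ≤ 1) (r : ℝ) (ξ : E) :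
    -bConst m * r ^ (2 * m) ≤
      ((((‖ξ‖ ^ 2 - r ^ 2 : ℝ) : ℂ) + ((2 * r * inner ℝ a ξ : ℝ) : ℂ) * Complex.I) ^ m).re := by
  refine neg_bConst_mul_pow_le_re_pow_of_norm_le hm ((norm_symbol_le ha r ξ).trans_eq ?_)
  rw [Complex.add_re, Complex.ofReal_re, Complex.re_ofReal_mul, Complex.I_re]
  ring

end InnerProductSpace

/-- for a unit vector `a`, `λ > 0` and a positive integer `m`, the symbol
`P_λ(ξ)` satisfies `Re P_λ(ξ) ≥ - b_m λ^{2m}` for every `ξ ∈ ℝⁿ`. -/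
theorem re_symbol_lower_bound (n m : ℕ) (hn : 1 ≤ n) (hm : 1 ≤ m)
    (a : EuclideanSpace ℝ (Fin n)) (ha : ‖a‖ = 1) (lam : ℝ) (hlam : 0 < lam)
    (ξ : EuclideanSpace ℝ (Fin n)) :
    -(bConst m) * lam ^ (2 * m) ≤ (Psymb n m a lam ξ).re :=
  re_symbol_lower_bound_general hm ha.le lam ξ
end

section
/- Let m be a positive integer and n ≥ 1. There exists a constant C > 0, depending only on n and m, such that for every multi-index β with |β| ≤ 2m-1, every r > 0, and every Schwartz function φ on ℝⁿ: r^{|β|} ‖∂^β φ‖_{L¹(ℝⁿ)} ≤ C ( r^{2m} ‖(-Δ)^m φ‖_{L¹(ℝⁿ)} + ‖φ‖_{L¹(ℝⁿ)} ). -/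
open Real MeasureTheory SchwartzMap

/-- Partial derivative in the `i`-th coordinate direction. -/
noncomputable def pd (n : ℕ) (i : Fin n) (f : EuclideanSpace ℝ (Fin n) → ℂ) :
    EuclideanSpace ℝ (Fin n) → ℂ :=
  fun x => fderiv ℝ f x (EuclideanSpace.single i 1)

/-- The negative Laplacian `-Δ`. -/
noncomputable def negLap (n : ℕ) (f : EuclideanSpace ℝ (Fin n) → ℂ) :
    EuclideanSpace ℝ (Fin n) → ℂ :=
  fun x => -∑ i : Fin n, pd n i (pd n i f) x

/-- The iterated negative Laplacian `(-Δ)^m`. -/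
noncomputable def negLapIter (n m : ℕ) (f : EuclideanSpace ℝ (Fin n) → ℂ) :
    EuclideanSpace ℝ (Fin n) → ℂ :=
  (negLap n)^[m] f

/-- The multi-index partial derivative `∂^β`. -/
noncomputable def mderiv (n : ℕ) (β : Fin n → ℕ) (f : EuclideanSpace ℝ (Fin n) → ℂ) :
    EuclideanSpace ℝ (Fin n) → ℂ :=
  ((List.ofFn fun i : Fin n => (pd n i)^[β i]).foldr (· ∘ ·) id) f

/-!
On Schwartz functions `∂^β` and `(-Δ)^m` are Fourier multipliers whose symbols `σ` and `τ` are
homogeneous of degrees `k = |β|` and `N = 2m`, and `τ` vanishes only at the origin. With a smooth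
cutoff `χ` equal to `1` on the unit ball, telescope `∂^β φ` over the dyadic frequency truncations
`χ (2⁻ʲ r •)`. The first truncation applied to `r^k ∂^β φ` is a multiplier with symbol a dilate of
the test function `χ σ`, so Young's inequality bounds it in `L¹` by `‖φ‖`, with a constant
independent of `r` because dilating a symbol preserves the `L¹` norm of its kernel. On the shell
at scale `s = 2⁻ʲ r` the symbol is supported away from the origin and can be divided by `τ`, so
this piece of `∂^β φ` has norm at most `C s^(N - k) ‖(-Δ)^m φ‖`. As `k < N`, these bounds sum to
a geometric series, and Fatou's lemma passes to the limit.
-/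

open Filter FourierTransform LineDeriv Laplacian Topology
open scoped ContDiff Convolution

section IntegralNorm

variable {α F : Type*} [MeasurableSpace α] {μ : Measure α} [NormedAddCommGroup F]

theorem integral_norm_le_of_tendsto_ae {f : ℕ → α → F} {g : α → F} {B : ℝ}
    (hf : ∀ j, Integrable (f j) μ) (hlim : ∀ᵐ x ∂μ, Tendsto (f · x) atTop (𝓝 (g x)))
    (hB : ∀ j, ∫ x, ‖f j x‖ ∂μ ≤ B) : ∫ x, ‖g x‖ ∂μ ≤ B := by
  have hg : AEStronglyMeasurable g μ :=
    aestronglyMeasurable_of_tendsto_ae atTop (fun j ↦ (hf j).aestronglyMeasurable) hlim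
  have hB₀ : 0 ≤ B := (integral_nonneg fun x ↦ norm_nonneg (f 0 x)).trans (hB 0)
  rw [integral_norm_eq_lintegral_enorm hg]
  refine ENNReal.toReal_le_of_le_ofReal hB₀ ?_
  calc ∫⁻ x, ‖g x‖ₑ ∂μ = ∫⁻ x, liminf (fun j ↦ ‖f j x‖ₑ) atTop ∂μ :=
        lintegral_congr_ae (hlim.mono fun x hx ↦ hx.enorm.liminf_eq.symm)
    _ ≤ liminf (fun j ↦ ∫⁻ x, ‖f j x‖ₑ ∂μ) atTop :=
        lintegral_liminf_le' fun j ↦ (hf j).aestronglyMeasurable.enorm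
    _ ≤ ENNReal.ofReal B := liminf_le_of_le ⟨0, by simp⟩ fun b hb ↦ by
        obtain ⟨j, hj⟩ := hb.exists
        refine hj.trans ?_
        rw [← ofReal_integral_norm_eq_lintegral_enorm (hf j)]
        exact ENNReal.ofReal_le_ofReal (hB j)

theorem integral_norm_le_add_sum_range {f : ℕ → α → F} (hf : ∀ j, Integrable (f j) μ) (J : ℕ) :
    ∫ x, ‖f J x‖ ∂μ ≤
      (∫ x, ‖f 0 x‖ ∂μ) + ∑ j ∈ Finset.range J, ∫ x, ‖f (j + 1) x - f j x‖ ∂μ := by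
  induction J with
  | zero => simp
  | succ J ih =>
    have hdiff := (hf (J + 1)).sub (hf J)
    calc ∫ x, ‖f (J + 1) x‖ ∂μ ≤ ∫ x, (‖f J x‖ + ‖f (J + 1) x - f J x‖) ∂μ :=
          integral_mono (hf _).norm ((hf J).norm.add hdiff.norm) fun x ↦ by
            simpa using norm_add_le (f J x) (f (J + 1) x - f J x)
      _ = (∫ x, ‖f J x‖ ∂μ) + ∫ x, ‖f (J + 1) x - f J x‖ ∂μ :=
          integral_add (hf J).norm hdiff.norm
      _ ≤ _ := by
          rw [Finset.sum_range_succ, ← add_assoc]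
          gcongr

theorem integral_norm_le_add_tsum_of_tendsto_ae {f : ℕ → α → F} {g : α → F} {d : ℕ → ℝ}
    (hf : ∀ j, Integrable (f j) μ) (hlim : ∀ᵐ x ∂μ, Tendsto (f · x) atTop (𝓝 (g x)))
    (hd : Summable d) (hfd : ∀ j, ∫ x, ‖f (j + 1) x - f j x‖ ∂μ ≤ d j) :
    ∫ x, ‖g x‖ ∂μ ≤ (∫ x, ‖f 0 x‖ ∂μ) + ∑' j, d j := by
  have hd₀ (j : ℕ) : 0 ≤ d j := (integral_nonneg fun x ↦ norm_nonneg _).trans (hfd j)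
  refine integral_norm_le_of_tendsto_ae hf hlim fun J ↦
    (integral_norm_le_add_sum_range hf J).trans ?_
  gcongr
  exact (Finset.sum_le_sum fun j _ ↦ hfd j).trans (hd.sum_le_tsum _ fun j _ ↦ hd₀ j)

end IntegralNorm

section Convolution

variable {𝕜 G F₁ F₂ F₃ : Type*} [NontriviallyNormedField 𝕜] [AddGroup G] [MeasurableSpace G]
  [MeasurableAdd₂ G] [MeasurableNeg G] {μ : Measure G} [SFinite μ] [μ.IsAddRightInvariant]
  [NormedAddCommGroup F₁] [NormedSpace 𝕜 F₁] [NormedAddCommGroup F₂] [NormedSpace 𝕜 F₂]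
  [NormedAddCommGroup F₃] [NormedSpace 𝕜 F₃] [NormedSpace ℝ F₃]

theorem integral_norm_convolution_le (L : F₁ →L[𝕜] F₂ →L[𝕜] F₃) {f : G → F₁} {g : G → F₂}
    (hf : Integrable f μ) (hg : Integrable g μ) :
    ∫ x, ‖(f ⋆[L, μ] g) x‖ ∂μ ≤ ‖L‖ * ((∫ x, ‖f x‖ ∂μ) * ∫ x, ‖g x‖ ∂μ) := by
  let mulR := ContinuousLinearMap.mul ℝ ℝ
  have hmul : ∫ x, ((‖f ·‖) ⋆[mulR, μ] (‖g ·‖)) x ∂μ = (∫ x, ‖f x‖ ∂μ) * ∫ x, ‖g x‖ ∂μ :=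
    integral_convolution mulR hf.norm hg.norm
  have hconv : Integrable ((‖f ·‖) ⋆[mulR, μ] (‖g ·‖)) μ :=
    hf.norm.integrable_convolution mulR hg.norm
  rw [← hmul, ← integral_const_mul]
  refine integral_mono_ae (hf.integrable_convolution L hg).norm (hconv.const_mul _) ?_
  filter_upwards [hf.norm.ae_convolution_exists mulR hg.norm] with x hx
  calc ‖(f ⋆[L, μ] g) x‖ ≤ ∫ t, ‖L‖ * (‖f t‖ * ‖g (x - t)‖) ∂μ :=
        norm_integral_le_of_norm_le (hx.const_mul ‖L‖) <| .of_forall fun t ↦ by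
          simpa only [mul_assoc] using L.le_opNorm₂ (f t) (g (x - t))
    _ = ‖L‖ * ((‖f ·‖) ⋆[mulR, μ] (‖g ·‖)) x := integral_const_mul _ _

end Convolution

theorem contDiff_mul_of_eventuallyEq_zero {𝕜 A E : Type*} [NontriviallyNormedField 𝕜]
    [NormedRing A] [NormedAlgebra 𝕜 A] [NormedAddCommGroup E] [NormedSpace 𝕜 E] {a g : E → A}
    {x₀ : E} {n : WithTop ℕ∞} (ha : ContDiff 𝕜 n a) (ha₀ : a =ᶠ[𝓝 x₀] 0)
    (hg : ∀ x ≠ x₀, ContDiffAt 𝕜 n g x) : ContDiff 𝕜 n (a * g) := by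
  rw [contDiff_iff_contDiffAt]
  intro x
  rcases eq_or_ne x x₀ with rfl | hx
  · refine contDiffAt_const (c := (0 : A)) |>.congr_of_eventuallyEq ?_
    filter_upwards [ha₀] with y hy
    simp [hy]
  · exact ha.contDiffAt.mul (hg x hx)

theorem exists_schwartzMap_mul_eq_mul {E : Type*} [NormedAddCommGroup E] [NormedSpace ℝ E]
    {a σ τ : E → ℂ} (ha : ContDiff ℝ ∞ a) (ha_supp : HasCompactSupport a) (ha₀ : a =ᶠ[𝓝 0] 0)
    (hσ : ContDiff ℝ ∞ σ) (hτ : ContDiff ℝ ∞ τ) (hτ₀ : ∀ ξ ≠ 0, τ ξ ≠ 0) :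
    ∃ b : 𝓢(E, ℂ), ∀ ξ, a ξ * σ ξ = b ξ * τ ξ := by
  have hb : ContDiff ℝ ∞ (a * (σ * τ⁻¹)) := contDiff_mul_of_eventuallyEq_zero ha ha₀ fun ξ hξ ↦
    hσ.contDiffAt.mul (hτ.contDiffAt.inv (hτ₀ ξ hξ))
  refine ⟨ha_supp.mul_right.toSchwartzMap hb, fun ξ ↦ ?_⟩
  rcases eq_or_ne ξ 0 with rfl | hξ
  · simp [ha₀.eq_of_nhds]
  · simp [hτ₀ ξ hξ, mul_assoc]

section FrequencyCutoff

variable {E : Type*} [NormedAddCommGroup E] [NormedSpace ℝ E]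

/-- A smooth compactly supported symbol that equals `1` on the closed unit ball. Its dilates
`ξ ↦ χ (s • ξ)` truncate the frequencies to `‖ξ‖ ≲ s⁻¹`. -/
structure IsFrequencyCutoff (χ : E → ℂ) : Prop where
  contDiff : ContDiff ℝ ∞ χ
  hasCompactSupport : HasCompactSupport χ
  eq_one : ∀ ⦃ξ⦄, ‖ξ‖ ≤ 1 → χ ξ = 1
  norm_le_one : ∀ ξ, ‖χ ξ‖ ≤ 1

theorem exists_isFrequencyCutoff (E : Type*) [NormedAddCommGroup E] [NormedSpace ℝ E]
    [FiniteDimensional ℝ E] : ∃ χ : E → ℂ, IsFrequencyCutoff χ := by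
  let χ : ContDiffBump (0 : E) := ⟨1, 2, one_pos, one_lt_two⟩
  refine ⟨fun ξ ↦ χ ξ, Complex.ofRealCLM.contDiff.comp χ.contDiff,
    χ.hasCompactSupport.comp_left Complex.ofReal_zero, fun ξ hξ ↦ ?_, fun ξ ↦ ?_⟩
  · simp [χ.one_of_mem_closedBall (mem_closedBall_zero_iff.2 hξ)]
  · simpa [abs_of_nonneg χ.nonneg] using χ.le_one

namespace IsFrequencyCutoff

variable {χ : E → ℂ}

theorem hasTemperateGrowth (hχ : IsFrequencyCutoff χ) : χ.HasTemperateGrowth :=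
  hχ.hasCompactSupport.hasTemperateGrowth hχ.contDiff

theorem comp_half_sub_eventuallyEq_zero (hχ : IsFrequencyCutoff χ) :
    (fun ξ ↦ χ ((2 : ℝ)⁻¹ • ξ) - χ ξ) =ᶠ[𝓝 0] 0 := by
  filter_upwards [Metric.closedBall_mem_nhds (0 : E) one_pos] with ξ hξ
  have hξ : ‖ξ‖ ≤ 1 := by simpa using hξ
  have hξ_half : ‖(2 : ℝ)⁻¹ • ξ‖ ≤ 1 := by
    rw [norm_smul, norm_inv, Real.norm_ofNat]
    linarith [norm_nonneg ξ]
  simp [hχ.eq_one hξ, hχ.eq_one hξ_half]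

end IsFrequencyCutoff

end FrequencyCutoff

theorem le_of_div_two_pow_mul_le {k N : ℕ} (hkN : k < N) {r X B : ℝ} (hr : 0 < r) (hB : 0 ≤ B)
    (j : ℕ) (h : (r / 2 ^ j) ^ k * X ≤ (r / 2 ^ j) ^ N * B) : X ≤ r ^ N * B / r ^ k / 2 ^ j := by
  obtain ⟨d, rfl⟩ := Nat.exists_eq_add_of_lt hkN
  have hs : 0 < r / 2 ^ j := by positivity
  have hX : X ≤ (r / 2 ^ j) ^ (d + 1) * B := by
    rw [add_assoc, pow_add, mul_assoc] at h
    exact le_of_mul_le_mul_left h (by positivity)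
  have hpow : (2 : ℝ) ^ j ≤ (2 ^ j) ^ (d + 1) := le_self_pow₀ (one_le_pow₀ one_le_two) (by simp)
  calc X ≤ (r / 2 ^ j) ^ (d + 1) * B := hX
    _ = r ^ (d + 1) * B / (2 ^ j) ^ (d + 1) := by rw [div_pow]; ring
    _ ≤ r ^ (d + 1) * B / 2 ^ j := by gcongr
    _ = _ := by field_simp; ring

section FourierMultiplier

variable {E F : Type*} [NormedAddCommGroup E] [InnerProductSpace ℝ E] [FiniteDimensional ℝ E]
  [MeasurableSpace E] [BorelSpace E] [NormedAddCommGroup F] [NormedSpace ℂ F]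

theorem fourierInv_comp_smul (a : E → F) {s : ℝ} (hs : 0 < s) (x : E) :
    𝓕⁻ (fun ξ ↦ a (s • ξ)) x = (s⁻¹ ^ Module.finrank ℝ E) • 𝓕⁻ a (s⁻¹ • x) := by
  rw [fourierInv_eq, fourierInv_eq, inv_pow,
    ← Measure.integral_comp_smul_of_nonneg volume _ s (hR := hs.le)]
  congr 1 with ξ
  rw [inner_smul_left, inner_smul_right, RCLike.conj_to_real, mul_inv_cancel_left₀ hs.ne']

/-- The `L¹` norm of the convolution kernel of the Fourier multiplier with symbol `a`. By Young's
inequality it bounds the operator norm of this multiplier on `L¹`. -/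
noncomputable def kernelNorm (a : E → ℂ) : ℝ := ∫ x, ‖𝓕⁻ a x‖

theorem kernelNorm_nonneg (a : E → ℂ) : 0 ≤ kernelNorm a := integral_nonneg fun _ ↦ norm_nonneg _

theorem kernelNorm_comp_smul (a : E → ℂ) {s : ℝ} (hs : 0 < s) :
    kernelNorm (fun ξ ↦ a (s • ξ)) = kernelNorm a := by
  simp_rw [kernelNorm, fourierInv_comp_smul a hs, norm_smul, integral_const_mul]
  rw [Measure.integral_comp_smul volume (fun x ↦ ‖𝓕⁻ a x‖) s⁻¹, smul_eq_mul, ← mul_assoc,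
    Real.norm_of_nonneg (by positivity), abs_of_pos (by positivity),
    mul_inv_cancel₀ (by positivity), one_mul]

theorem fourierMultiplierCLM_apply_eq_integral {a : E → ℂ} (ha : a.HasTemperateGrowth)
    (f : 𝓢(E, F)) (x : E) :
    fourierMultiplierCLM F a f x = ∫ ξ, 𝐞 (inner ℝ ξ x) • a ξ • 𝓕 f ξ := by
  rw [fourierMultiplierCLM_apply, fourierInv_coe, fourierInv_eq]
  simp only [smulLeftCLM_apply_apply ha]

theorem fourierMultiplierCLM_sub {a b : E → ℂ} (ha : a.HasTemperateGrowth)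
    (hb : b.HasTemperateGrowth) (f : 𝓢(E, F)) :
    fourierMultiplierCLM F (fun ξ ↦ a ξ - b ξ) f =
      fourierMultiplierCLM F a f - fourierMultiplierCLM F b f := by
  simp only [fourierMultiplierCLM_apply]
  rw [show (fun ξ ↦ a ξ - b ξ) = a - b from rfl, smulLeftCLM_sub ha hb, sub_apply]
  exact map_sub (fourierInvCLM ℂ 𝓢(E, F)) _ _

theorem tendsto_fourierMultiplierCLM_apply {ι : Type*} {l : Filter ι} [l.IsCountablyGenerated]
    {a : ι → E → ℂ} {a₀ : E → ℂ} {M : ℝ} (ha : ∀ i, (a i).HasTemperateGrowth)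
    (ha₀ : a₀.HasTemperateGrowth) (hM : ∀ i ξ, ‖a i ξ‖ ≤ M)
    (hlim : ∀ ξ, Tendsto (a · ξ) l (𝓝 (a₀ ξ))) (f : 𝓢(E, F)) (x : E) :
    Tendsto (fun i ↦ fourierMultiplierCLM F (a i) f x) l (𝓝 (fourierMultiplierCLM F a₀ f x)) := by
  simp only [fourierMultiplierCLM_apply_eq_integral, ha, ha₀]
  refine tendsto_integral_filter_of_dominated_convergence (fun ξ ↦ M * ‖𝓕 f ξ‖)
    (.of_forall fun i ↦ ?_) (.of_forall fun i ↦ .of_forall fun ξ ↦ ?_)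
    ((𝓕 f).integrable.norm.const_mul M) (.of_forall fun ξ ↦ ?_)
  · have := (ha i).1.continuous
    have := (𝓕 f).continuous
    exact Continuous.aestronglyMeasurable (by fun_prop)
  · rw [Circle.norm_smul, norm_smul]
    gcongr
    exact hM i ξ
  · exact ((hlim ξ).smul_const _).const_smul _

variable [CompleteSpace F]

theorem fourierMultiplierCLM_eq_convolution (a : 𝓢(E, ℂ)) (f : 𝓢(E, F)) :
    fourierMultiplierCLM F a f = convolution (.lsmul ℂ ℂ) (𝓕⁻ a) f := by
  rw [← fourierInv_fourier_eq (F := 𝓢(E, F)) (convolution (.lsmul ℂ ℂ) (𝓕⁻ a) f),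
    fourier_convolution, fourier_fourierInv_eq, fourierMultiplierCLM_apply]
  congr 1
  ext ξ
  simp [smulLeftCLM_apply_apply a.hasTemperateGrowth]

theorem integral_norm_fourierMultiplierCLM_le (a : 𝓢(E, ℂ)) (f : 𝓢(E, F)) :
    ∫ x, ‖fourierMultiplierCLM F a f x‖ ≤ kernelNorm a * ∫ x, ‖f x‖ := by
  have hL : ‖(.lsmul ℂ ℂ : ℂ →L[ℂ] F →L[ℂ] F)‖ ≤ 1 := ContinuousLinearMap.opNorm_lsmul_le
  simp only [fourierMultiplierCLM_eq_convolution, convolution_apply, kernelNorm]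
  refine (integral_norm_convolution_le _ (𝓕⁻ a).integrable f.integrable).trans ?_
  rw [fourierInv_coe]
  exact mul_le_of_le_one_left (by positivity) hL

theorem integral_norm_fourierMultiplierCLM_comp_smul_le (a : 𝓢(E, ℂ)) {s : ℝ} (hs : 0 < s)
    (f : 𝓢(E, F)) :
    ∫ x, ‖fourierMultiplierCLM F (fun ξ ↦ a (s • ξ)) f x‖ ≤ kernelNorm a * ∫ x, ‖f x‖ := by
  rw [← kernelNorm_comp_smul a hs]
  exact integral_norm_fourierMultiplierCLM_le
    (compCLMOfContinuousLinearEquiv ℂ (.smulLeft (Units.mk0 s hs.ne')) a) f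

end FourierMultiplier

/-- A function that is homogeneous of degree `k` under dilations by positive scalars, such as the
symbol of a differential operator of pure order `k`. -/
def IsPosHomogeneous {E : Type*} [SMul ℝ E] (k : ℕ) (σ : E → ℂ) : Prop :=
  ∀ ⦃s : ℝ⦄, 0 < s → ∀ ξ, σ (s • ξ) = (s : ℂ) ^ k * σ ξ

section Homogeneous

variable {E F : Type*} [NormedAddCommGroup E] [InnerProductSpace ℝ E] [FiniteDimensional ℝ E]
  [MeasurableSpace E] [BorelSpace E] [NormedAddCommGroup F] [NormedSpace ℂ F] [CompleteSpace F]

theorem pow_smul_fourierMultiplierCLM_comp_smul {k N : ℕ} {a b σ τ : E → ℂ}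
    (ha : a.HasTemperateGrowth) (hb : b.HasTemperateGrowth) (hσ : σ.HasTemperateGrowth)
    (hτ : τ.HasTemperateGrowth) (hσk : IsPosHomogeneous k σ) (hτN : IsPosHomogeneous N τ)
    (hab : ∀ ξ, a ξ * σ ξ = b ξ * τ ξ) {s : ℝ} (hs : 0 < s) (f : 𝓢(E, F)) :
    (s : ℂ) ^ k • fourierMultiplierCLM F (fun ξ ↦ a (s • ξ)) (fourierMultiplierCLM F σ f) =
      (s : ℂ) ^ N • fourierMultiplierCLM F (fun ξ ↦ b (s • ξ)) (fourierMultiplierCLM F τ f) := by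
  have hsymbol : (s : ℂ) ^ k • ((fun ξ ↦ a (s • ξ)) * σ) =
      (s : ℂ) ^ N • ((fun ξ ↦ b (s • ξ)) * τ) := by
    ext ξ
    have := hab (s • ξ)
    rw [hσk hs, hτN hs] at this
    simp only [Pi.smul_apply, Pi.mul_apply, smul_eq_mul]
    linear_combination this
  have has : (fun ξ ↦ a (s • ξ)).HasTemperateGrowth := by fun_prop
  have hbs : (fun ξ ↦ b (s • ξ)).HasTemperateGrowth := by fun_prop
  rw [fourierMultiplierCLM_fourierMultiplierCLM_apply has hσ,
    fourierMultiplierCLM_fourierMultiplierCLM_apply hbs hτ, ← smul_apply, ← smul_apply,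
    ← fourierMultiplierCLM_smul (has.mul hσ), ← fourierMultiplierCLM_smul (hbs.mul hτ), hsymbol]

theorem pow_mul_integral_norm_fourierMultiplierCLM_comp_smul_le {k N : ℕ} {a σ τ : E → ℂ}
    {b : 𝓢(E, ℂ)} (ha : a.HasTemperateGrowth) (hσ : σ.HasTemperateGrowth)
    (hτ : τ.HasTemperateGrowth) (hσk : IsPosHomogeneous k σ) (hτN : IsPosHomogeneous N τ)
    (hab : ∀ ξ, a ξ * σ ξ = b ξ * τ ξ) {s : ℝ} (hs : 0 < s) (f : 𝓢(E, F)) :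
    s ^ k * ∫ x, ‖fourierMultiplierCLM F (fun ξ ↦ a (s • ξ)) (fourierMultiplierCLM F σ f) x‖ ≤
      s ^ N * (kernelNorm b * ∫ x, ‖fourierMultiplierCLM F τ f x‖) := by
  have hpull (j : ℕ) (g : 𝓢(E, F)) : s ^ j * ∫ x, ‖g x‖ = ∫ x, ‖((s : ℂ) ^ j • g) x‖ := by
    simp [norm_smul, integral_const_mul, abs_of_pos hs]
  rw [hpull, pow_smul_fourierMultiplierCLM_comp_smul ha b.hasTemperateGrowth hσ hτ hσk hτN hab hs,
    ← hpull]
  gcongr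
  exact integral_norm_fourierMultiplierCLM_comp_smul_le b hs _

namespace IsFrequencyCutoff

variable {χ : E → ℂ}

theorem tendsto_fourierMultiplierCLM (hχ : IsFrequencyCutoff χ) {s : ℕ → ℝ}
    (hs : Tendsto s atTop (𝓝 0)) (f : 𝓢(E, F)) (x : E) :
    Tendsto (fun j ↦ fourierMultiplierCLM F (fun ξ ↦ χ (s j • ξ)) f x) atTop (𝓝 (f x)) := by
  have hχ_temp := hχ.hasTemperateGrowth
  have hlim (ξ : E) : Tendsto (fun j ↦ χ (s j • ξ)) atTop (𝓝 1) := by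
    rw [← hχ.eq_one (ξ := 0) (by simp), ← zero_smul ℝ ξ]
    exact (hχ.contDiff.continuous.tendsto _).comp (hs.smul_const ξ)
  simpa using tendsto_fourierMultiplierCLM_apply (fun j ↦ by fun_prop) (.const 1)
    (fun j ξ ↦ hχ.norm_le_one (s j • ξ)) hlim f x

variable {k N : ℕ} {σ τ : E → ℂ}

theorem exists_pow_mul_integral_norm_lowFrequency_le (hχ : IsFrequencyCutoff χ)
    (hσ : σ.HasTemperateGrowth) (hσk : IsPosHomogeneous k σ) :
    ∃ A, 0 ≤ A ∧ ∀ s : ℝ, 0 < s → ∀ f : 𝓢(E, F),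
      s ^ k * ∫ x, ‖fourierMultiplierCLM F (fun ξ ↦ χ (s • ξ)) (fourierMultiplierCLM F σ f) x‖ ≤
        A * ∫ x, ‖f x‖ := by
  let b : 𝓢(E, ℂ) := hχ.hasCompactSupport.mul_right.toSchwartzMap (hχ.contDiff.mul hσ.1)
  refine ⟨kernelNorm b, kernelNorm_nonneg b, fun s hs f ↦ ?_⟩
  simpa using pow_mul_integral_norm_fourierMultiplierCLM_comp_smul_le (b := b) (N := 0)
    (τ := fun _ ↦ 1) hχ.hasTemperateGrowth hσ (.const 1) hσk (fun _ _ _ ↦ by simp)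
    (fun ξ ↦ by simp [b]) hs f

theorem exists_pow_mul_integral_norm_shell_le (hχ : IsFrequencyCutoff χ)
    (hσ : σ.HasTemperateGrowth) (hτ : τ.HasTemperateGrowth) (hσk : IsPosHomogeneous k σ)
    (hτN : IsPosHomogeneous N τ) (hτ₀ : ∀ ξ ≠ 0, τ ξ ≠ 0) :
    ∃ B, 0 ≤ B ∧ ∀ s : ℝ, 0 < s → ∀ f : 𝓢(E, F),
      s ^ k * ∫ x,
          ‖fourierMultiplierCLM F (fun ξ ↦ χ ((s / 2) • ξ)) (fourierMultiplierCLM F σ f) x -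
            fourierMultiplierCLM F (fun ξ ↦ χ (s • ξ)) (fourierMultiplierCLM F σ f) x‖ ≤
        s ^ N * (B * ∫ x, ‖fourierMultiplierCLM F τ f x‖) := by
  let δ : E → ℂ := fun ξ ↦ χ ((2 : ℝ)⁻¹ • ξ) - χ ξ
  have hδ : ContDiff ℝ ∞ δ := (hχ.contDiff.comp (contDiff_const_smul _)).sub hχ.contDiff
  have hδ_supp : HasCompactSupport δ :=
    (hχ.hasCompactSupport.comp_smul (by norm_num)).sub hχ.hasCompactSupport
  obtain ⟨b, hb⟩ := exists_schwartzMap_mul_eq_mul hδ hδ_supp hχ.comp_half_sub_eventuallyEq_zero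
    hσ.1 hτ.1 hτ₀
  refine ⟨kernelNorm b, kernelNorm_nonneg b, fun s hs f ↦ ?_⟩
  have hsplit (g : 𝓢(E, F)) (x : E) : fourierMultiplierCLM F (fun ξ ↦ δ (s • ξ)) g x =
      fourierMultiplierCLM F (fun ξ ↦ χ ((s / 2) • ξ)) g x -
        fourierMultiplierCLM F (fun ξ ↦ χ (s • ξ)) g x := by
    have hχ_temp := hχ.hasTemperateGrowth
    have hhalf (ξ : E) : (2 : ℝ)⁻¹ • s • ξ = (s / 2) • ξ := by rw [smul_smul]; ring_nf
    simp only [δ, hhalf]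
    rw [fourierMultiplierCLM_sub (by fun_prop) (by fun_prop), sub_apply]
  simpa only [hsplit] using pow_mul_integral_norm_fourierMultiplierCLM_comp_smul_le
    (hδ_supp.hasTemperateGrowth hδ) hσ hτ hσk hτN hb hs f

end IsFrequencyCutoff

theorem exists_pow_mul_integral_norm_fourierMultiplierCLM_le {k N : ℕ} (hkN : k < N)
    {σ τ : E → ℂ} (hσ : σ.HasTemperateGrowth) (hτ : τ.HasTemperateGrowth)
    (hσk : IsPosHomogeneous k σ) (hτN : IsPosHomogeneous N τ) (hτ₀ : ∀ ξ ≠ 0, τ ξ ≠ 0) :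
    ∃ C, ∀ r : ℝ, 0 < r → ∀ f : 𝓢(E, F),
      r ^ k * ∫ x, ‖fourierMultiplierCLM F σ f x‖ ≤
        C * (r ^ N * (∫ x, ‖fourierMultiplierCLM F τ f x‖) + ∫ x, ‖f x‖) := by
  obtain ⟨χ, hχ⟩ := exists_isFrequencyCutoff E
  obtain ⟨A, hA₀, hA⟩ := hχ.exists_pow_mul_integral_norm_lowFrequency_le (F := F) hσ hσk
  obtain ⟨B, hB₀, hB⟩ := hχ.exists_pow_mul_integral_norm_shell_le (F := F) hσ hτ hσk hτN hτ₀
  refine ⟨A + 2 * B, fun r hr f ↦ ?_⟩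
  set I := ∫ x, ‖f x‖
  set J := ∫ x, ‖fourierMultiplierCLM F τ f x‖
  let g (j : ℕ) : 𝓢(E, F) :=
    fourierMultiplierCLM F (fun ξ ↦ χ ((r / 2 ^ j) • ξ)) (fourierMultiplierCLM F σ f)
  let D := r ^ N * (B * J) / r ^ k
  have hscale : Tendsto (fun j : ℕ ↦ r / 2 ^ j) atTop (𝓝 0) :=
    tendsto_const_nhds.div_atTop (tendsto_pow_atTop_atTop_of_one_lt one_lt_two)
  have hlow : r ^ k * ∫ x, ‖g 0 x‖ ≤ A * I := by simpa [g] using hA r hr f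
  have hshell (j : ℕ) : ∫ x, ‖g (j + 1) x - g j x‖ ≤ D / 2 ^ j := by
    refine le_of_div_two_pow_mul_le hkN hr (by positivity) j ?_
    simpa only [g, pow_succ, div_div] using hB (r / 2 ^ j) (by positivity) f
  have hlimit : ∫ x, ‖fourierMultiplierCLM F σ f x‖ ≤ (∫ x, ‖g 0 x‖) + 2 * D := by
    have hgeom : HasSum (fun j : ℕ ↦ D / 2 ^ j) (2 * D) := by
      simpa using hasSum_geometric_two' (2 * D)
    rw [← hgeom.tsum_eq]
    exact integral_norm_le_add_tsum_of_tendsto_ae (fun j ↦ (g j).integrable)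
      (.of_forall fun x ↦ hχ.tendsto_fourierMultiplierCLM hscale _ x) hgeom.summable hshell
  calc r ^ k * ∫ x, ‖fourierMultiplierCLM F σ f x‖ ≤ r ^ k * ((∫ x, ‖g 0 x‖) + 2 * D) := by gcongr
    _ = r ^ k * (∫ x, ‖g 0 x‖) + 2 * B * (r ^ N * J) := by simp only [D]; field_simp
    _ ≤ A * I + 2 * B * (r ^ N * J) := by gcongr
    _ ≤ A * (r ^ N * J + I) + 2 * B * (r ^ N * J + I) := by
      gcongr
      · exact le_add_of_nonneg_left (by positivity)
      · exact le_add_of_nonneg_right (by positivity)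
    _ = (A + 2 * B) * (r ^ N * J + I) := by ring

end Homogeneous

section Symbol

variable {E F : Type*} [NormedAddCommGroup E] [InnerProductSpace ℝ E] [FiniteDimensional ℝ E]
  [MeasurableSpace E] [BorelSpace E] [NormedAddCommGroup F] [NormedSpace ℂ F] [CompleteSpace F]

/-- The operator `D` on functions acts on Schwartz functions as the Fourier multiplier with the
symbol `σ`. Temperate growth of `σ` is part of the notion because `fourierMultiplierCLM F σ` has
the junk value `0` without it. -/
structure HasSymbol (D : (E → F) → E → F) (σ : E → ℂ) : Prop where
  hasTemperateGrowth : σ.HasTemperateGrowth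
  apply_eq : ∀ f : 𝓢(E, F), D f = fourierMultiplierCLM F σ f

namespace HasSymbol

variable {D D₁ D₂ : (E → F) → E → F} {σ σ₁ σ₂ : E → ℂ}

theorem comp (h₁ : HasSymbol D₁ σ₁) (h₂ : HasSymbol D₂ σ₂) : HasSymbol (D₁ ∘ D₂) (σ₁ * σ₂) where
  hasTemperateGrowth := h₁.hasTemperateGrowth.mul h₂.hasTemperateGrowth
  apply_eq f := by
    rw [Function.comp_apply, h₂.apply_eq, h₁.apply_eq,
      fourierMultiplierCLM_fourierMultiplierCLM_apply h₁.hasTemperateGrowth h₂.hasTemperateGrowth]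

theorem id : HasSymbol (id : (E → F) → E → F) 1 where
  hasTemperateGrowth := .const 1
  apply_eq f := by
    rw [show (1 : E → ℂ) = fun _ ↦ 1 from rfl, fourierMultiplierCLM_const]
    simp

theorem iterate (h : HasSymbol D σ) (m : ℕ) : HasSymbol D^[m] (σ ^ m) := by
  induction m with
  | zero => exact .id
  | succ m ih => exact ih.comp h

theorem foldr_ofFn {k : ℕ} {D : Fin k → (E → F) → E → F} {σ : Fin k → E → ℂ}
    (h : ∀ i, HasSymbol (D i) (σ i)) :
    HasSymbol ((List.ofFn D).foldr (· ∘ ·) _root_.id) (∏ i, σ i) := by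
  induction k with
  | zero => simpa using .id
  | succ k ih =>
    rw [List.ofFn_succ, Fin.prod_univ_succ]
    exact (h 0).comp (ih fun i ↦ h i.succ)

end HasSymbol

theorem hasSymbol_fderiv_apply (v : E) :
    HasSymbol (fun (f : E → F) x ↦ fderiv ℝ f x v)
      fun ξ ↦ 2 * π * Complex.I * (inner ℝ ξ v : ℝ) where
  hasTemperateGrowth := by fun_prop
  apply_eq f := by
    have hinner : (fun ξ ↦ inner ℝ ξ v).HasTemperateGrowth := by fun_prop
    have hinner_ofReal : (fun ξ ↦ ((inner ℝ ξ v : ℝ) : ℂ)).HasTemperateGrowth := by fun_prop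
    calc (fun x ↦ fderiv ℝ f x v) = ∂_{v} f := rfl
      _ = fourierMultiplierCLM F
          ((2 * π * Complex.I) • fun ξ ↦ ((inner ℝ ξ v : ℝ) : ℂ)) f := by
        rw [lineDeriv_eq_fourierMultiplierCLM, fourierMultiplierCLM_smul hinner_ofReal,
          ← fourierMultiplierCLM_ofReal ℂ hinner]
        rfl

theorem neg_laplacian_eq_fourierMultiplierCLM (f : 𝓢(E, F)) :
    -Δ f = fourierMultiplierCLM F (fun ξ ↦ ((2 * π * ‖ξ‖ : ℝ) : ℂ) ^ 2) f := by
  have hnorm : (fun ξ : E ↦ ‖ξ‖ ^ 2).HasTemperateGrowth := by fun_prop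
  have hreal : (fun ξ : E ↦ (2 * π * ‖ξ‖) ^ 2).HasTemperateGrowth := by
    simp only [mul_pow]
    fun_prop
  calc -Δ f = (2 * π) ^ 2 • fourierMultiplierCLM F (fun ξ ↦ ‖ξ‖ ^ 2) f := by
        rw [laplacian_eq_fourierMultiplierCLM, neg_smul, neg_neg]
    _ = fourierMultiplierCLM F (fun ξ ↦ (2 * π * ‖ξ‖) ^ 2) f := by
        rw [← smul_apply, ← fourierMultiplierCLM_smul hnorm]
        simp only [Pi.smul_def, smul_eq_mul, mul_pow]
    _ = fourierMultiplierCLM F (fun ξ ↦ ((2 * π * ‖ξ‖ : ℝ) : ℂ) ^ 2) f := by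
        rw [← fourierMultiplierCLM_ofReal ℂ hreal]
        simp only [Complex.coe_algebraMap, Complex.ofReal_pow]

end Symbol

section CoordinateDerivatives

variable {n : ℕ}

theorem hasSymbol_pd (i : Fin n) : HasSymbol (pd n i) fun ξ ↦ 2 * π * Complex.I * ξ i := by
  change HasSymbol (fun f x ↦ fderiv ℝ f x (EuclideanSpace.single i 1)) _
  simpa [EuclideanSpace.inner_single_right] using
    hasSymbol_fderiv_apply (F := ℂ) (EuclideanSpace.single i (1 : ℝ))

theorem hasSymbol_mderiv (β : Fin n → ℕ) :
    HasSymbol (mderiv n β) (∏ i, (fun ξ ↦ 2 * π * Complex.I * ξ i) ^ β i) :=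
  .foldr_ofFn fun i ↦ (hasSymbol_pd i).iterate (β i)

theorem negLap_coe_eq_neg_laplacian (f : 𝓢(EuclideanSpace ℝ (Fin n), ℂ)) :
    negLap n f = (-Δ f : 𝓢(EuclideanSpace ℝ (Fin n), ℂ)) := by
  ext x
  rw [laplacian_eq_sum (EuclideanSpace.basisFun (Fin n) ℝ)]
  simp only [negLap, EuclideanSpace.basisFun_apply, neg_apply, sum_apply]
  rfl

theorem hasSymbol_negLap : HasSymbol (negLap n) fun ξ ↦ ((2 * π * ‖ξ‖ : ℝ) : ℂ) ^ 2 where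
  hasTemperateGrowth := by
    simp only [← Complex.ofReal_pow, mul_pow]
    fun_prop
  apply_eq f := by rw [negLap_coe_eq_neg_laplacian, neg_laplacian_eq_fourierMultiplierCLM]

theorem hasSymbol_negLapIter (m : ℕ) :
    HasSymbol (negLapIter n m) ((fun ξ ↦ ((2 * π * ‖ξ‖ : ℝ) : ℂ) ^ 2) ^ m) :=
  hasSymbol_negLap.iterate m

theorem isPosHomogeneous_mderiv_symbol (β : Fin n → ℕ) :
    IsPosHomogeneous (∑ i, β i)
      (∏ i, (fun ξ : EuclideanSpace ℝ (Fin n) ↦ 2 * π * Complex.I * ξ i) ^ β i) := by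
  intro s _ ξ
  simp only [Finset.prod_apply, Pi.pow_apply, PiLp.smul_apply, smul_eq_mul, Complex.ofReal_mul]
  rw [← Finset.prod_pow_eq_pow_sum, ← Finset.prod_mul_distrib]
  congr! 1 with i
  ring

theorem isPosHomogeneous_negLapIter_symbol (m : ℕ) :
    IsPosHomogeneous (2 * m)
      ((fun ξ : EuclideanSpace ℝ (Fin n) ↦ ((2 * π * ‖ξ‖ : ℝ) : ℂ) ^ 2) ^ m) := by
  intro s hs ξ
  simp only [Pi.pow_apply, norm_smul, Real.norm_of_nonneg hs.le, Complex.ofReal_mul]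
  ring

theorem exists_pow_mul_integral_norm_mderiv_le {m : ℕ} {β : Fin n → ℕ} (hβ : ∑ i, β i < 2 * m) :
    ∃ C, ∀ r : ℝ, 0 < r → ∀ f : 𝓢(EuclideanSpace ℝ (Fin n), ℂ),
      r ^ (∑ i, β i) * ∫ x, ‖mderiv n β f x‖ ≤
        C * (r ^ (2 * m) * (∫ x, ‖negLapIter n m f x‖) + ∫ x, ‖f x‖) := by
  simp only [(hasSymbol_mderiv β).apply_eq, (hasSymbol_negLapIter m).apply_eq]
  refine exists_pow_mul_integral_norm_fourierMultiplierCLM_le hβ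
    (hasSymbol_mderiv β).hasTemperateGrowth (hasSymbol_negLapIter m).hasTemperateGrowth
    (isPosHomogeneous_mderiv_symbol β) (isPosHomogeneous_negLapIter_symbol m) fun ξ hξ ↦ ?_
  simp [hξ, pi_ne_zero]

end CoordinateDerivatives

theorem finite_setOf_sum_lt {ι : Type*} [Fintype ι] (N : ℕ) :
    {β : ι → ℕ | ∑ i, β i < N}.Finite := by
  classical
  exact (Set.finite_Icc 0 fun _ ↦ N).subset fun β hβ ↦ ⟨zero_le, fun i ↦
    (Finset.single_le_sum (fun _ _ ↦ Nat.zero_le _) (Finset.mem_univ i)).trans (le_of_lt hβ)⟩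

/-- there exists `C > 0` depending only on `n` and `m` such that for every
multi-index `β` with `|β| ≤ 2m-1`, every `r > 0`, and every Schwartz function `φ`,
`r^{|β|} ‖∂^β φ‖_{L¹} ≤ C ( r^{2m} ‖(-Δ)^m φ‖_{L¹} + ‖φ‖_{L¹} )`. -/
theorem interpolation_inequality_L1 (n m : ℕ) (hn : 1 ≤ n) (hm : 1 ≤ m) :
    ∃ C > (0 : ℝ), ∀ β : Fin n → ℕ, (∑ i, β i) ≤ 2 * m - 1 → ∀ r : ℝ, 0 < r →
      ∀ φ : SchwartzMap (EuclideanSpace ℝ (Fin n)) ℂ,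
      r ^ (∑ i, β i) * ∫ x, ‖mderiv n β (⇑φ) x‖ ≤
        C * (r ^ (2 * m) * (∫ x, ‖negLapIter n m (⇑φ) x‖) + ∫ x, ‖φ x‖) := by
  choose! C hC using fun (β : Fin n → ℕ) (hβ : ∑ i, β i < 2 * m) ↦
    exists_pow_mul_integral_norm_mderiv_le hβ
  obtain ⟨B, hB⟩ := ((finite_setOf_sum_lt (2 * m)).image C).bddAbove
  refine ⟨max B 1, by positivity, fun β hβ r hr φ ↦ ?_⟩
  have hβ : ∑ i, β i < 2 * m := by omega
  have hCβ : C β ≤ max B 1 := (hB (Set.mem_image_of_mem C hβ)).trans (le_max_left B 1)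
  exact (hC β hβ r hr φ).trans (by gcongr)
end

section
/- Let α > 0 be a non-integer and n ≥ 1. There exists a constant C₁ > 0 such that for all t > 0 and all x ∈ ℝⁿ \ {0}: |K₀(t,x)| ≤ C₁ I(t,x), i.e. |K₀(t,x)| ≤ C₁ min( t·|x|^{-(n+2α)}, t^{-n/(2α)} ). -/
open Real MeasureTheory
open scoped Classical

/-- The free heat kernel `K₀(t,x) = (2π)^{-n} ∫_{ℝⁿ} e^{i x·ξ} e^{-t|ξ|^{2α}} dξ`
of the semigroup `e^{-t(-Δ)^α}`. -/
noncomputable def K0 (n : ℕ) (α : ℝ) (t : ℝ) (x : EuclideanSpace ℝ (Fin n)) : ℂ :=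
  ((2 * Real.pi) ^ (-(n : ℝ)) : ℝ) •
    ∫ ξ : EuclideanSpace ℝ (Fin n),
      Complex.exp (Complex.I * ((inner ℝ x ξ : ℝ) : ℂ)) *
        Complex.exp (-(t : ℂ) * ((‖ξ‖ ^ (2 * α) : ℝ) : ℂ))

/-- `I(t,x) = min(t·|x|^{-(n+2α)}, t^{-n/(2α)})`  (with the convention that at `x = 0` only the
second, finite, term is kept, since `|0|^{-(n+2α)} = +∞`). -/
noncomputable def Ifun (n : ℕ) (α : ℝ) (t : ℝ) (x : EuclideanSpace ℝ (Fin n)) : ℝ :=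
  if x = 0 then t ^ (-(n : ℝ) / (2 * α))
  else min (t * ‖x‖ ^ (-((n : ℝ) + 2 * α))) (t ^ (-(n : ℝ) / (2 * α)))

/-!
Write `J(t, x) = ∫ e^{i x·ξ} f_t(ξ) dξ` with `f_t(ξ) = e^{-t|ξ|^{2α}}`. The substitution `ξ ↦ s ξ`
gives `J(t, x) = s^n J(s^{2α} t, s x)`. Taking `s = t^{-1/(2α)}` reduces the bound by
`t^{-n/(2α)}` to the boundedness of `J(1, ·)`; taking `s = π/|x|` reduces the other bound to
`|J(t, x)| ≤ C t` on the sphere `|x| = π`.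

On that sphere put `h = x/π`, a unit vector. Since `e^{i x·(ξ + h)} = -e^{i x·ξ}`, summation by
parts turns `∫ e^{i x·ξ} Δ_h^N f_t(ξ) dξ` into `(-2)^N J(t, x)`, so it suffices that
`|Δ_h^N f_t(ξ)| ≤ C t (1 + |ξ|)^{2α - N}` with `N > n + 2α`. For bounded `ξ` this follows from
`|f_t(ξ) - 1| ≤ 2 t |ξ|^{2α}`. For large `ξ` the function `r ↦ f_t(ξ + r h) - 1` extends
holomorphically to a disc of radius comparable to `|ξ|`, on which it is `O(t |ξ|^{2α})`, and the
Schwarz lemma gains a factor `O(1/|ξ|)` for each difference.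
-/

open Metric Module
open scoped fwdDiff Topology

section FiniteDifferences

variable {G G' A F : Type*} [AddCommMonoid G] [AddCommMonoid G'] [AddCommGroup A]
  [SeminormedAddCommGroup F]

theorem fwdDiff_iter_sub_const (h : G) (f : G → A) (c : A) {N : ℕ} (hN : N ≠ 0) :
    (Δ_[h])^[N] (fun y ↦ f y - c) = (Δ_[h])^[N] f := by
  obtain ⟨m, rfl⟩ := Nat.exists_eq_succ_of_ne_zero hN
  rw [Function.iterate_succ_apply, Function.iterate_succ_apply]
  congr 1
  ext y
  simp only [fwdDiff, sub_sub_sub_cancel_right]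

theorem fwdDiff_iter_eq_of_forall_le {f : G → A} {g : G' → A} {h y : G} {h' y' : G'} {N : ℕ}
    (hfg : ∀ k ≤ N, f (y + k • h) = g (y' + k • h')) :
    (Δ_[h])^[N] f y = (Δ_[h'])^[N] g y' := by
  rw [fwdDiff_iter_eq_sum_shift, fwdDiff_iter_eq_sum_shift]
  refine Finset.sum_congr rfl fun k hk ↦ ?_
  rw [hfg k (Finset.mem_range_succ_iff.mp hk)]

theorem norm_fwdDiff_iter_le {N : ℕ} {f : G → F} {h y : G} {M : ℝ}
    (hf : ∀ k ≤ N, ‖f (y + k • h)‖ ≤ M) : ‖(Δ_[h])^[N] f y‖ ≤ 2 ^ N * M := by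
  induction N generalizing f M with
  | zero => simpa using hf 0 le_rfl
  | succ N ih =>
    have hdiff : ∀ k ≤ N, ‖Δ_[h] f (y + k • h)‖ ≤ 2 * M := fun k hk ↦ by
      have hsucc := hf (k + 1) (by lia)
      rw [succ_nsmul, ← add_assoc] at hsucc
      exact (norm_sub_le _ _).trans (by linarith [hf k (by lia)])
    rw [Function.iterate_succ_apply]
    exact (ih hdiff).trans_eq (by ring)

theorem norm_fwdDiff_iter_le_of_differentiableOn_ball {E : Type*} [NormedAddCommGroup E]
    [NormedSpace ℂ E] {N : ℕ} {f : ℂ → E} {c h : ℂ} {r M : ℝ} (hr : ‖h‖ < r)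
    (hd : DifferentiableOn ℂ f (ball c ((N + 1) * r)))
    (hM : ∀ z ∈ ball c ((N + 1) * r), ‖f z‖ ≤ M) :
    ‖(Δ_[h])^[N] f c‖ ≤ M * (2 * ‖h‖ / r) ^ N := by
  have hr0 : 0 < r := (norm_nonneg h).trans_lt hr
  induction N generalizing f M with
  | zero => simpa using hM c (by simpa using hr0)
  | succ N ih =>
    have hsub : ∀ z ∈ ball c ((N + 1) * r), ball z r ⊆ ball c (((N + 1 : ℕ) + 1) * r) := by
      refine fun z hz ↦ ball_subset_ball' ?_
      rw [mem_ball] at hz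
      push_cast
      linarith
    have hself : ∀ z : ℂ, z ∈ ball z r := fun z ↦ mem_ball_self hr0
    have hstep : ∀ z : ℂ, z + h ∈ ball z r := fun z ↦ by simpa using hr
    have hd' : DifferentiableOn ℂ (Δ_[h] f) (ball c ((N + 1) * r)) :=
      (hd.comp (by fun_prop) fun z hz ↦ hsub z hz (hstep z)).sub
        (hd.mono fun z hz ↦ hsub z hz (hself z))
    have hM' : ∀ z ∈ ball c ((N + 1) * r), ‖Δ_[h] f z‖ ≤ M * (2 * ‖h‖ / r) := by
      intro z hz
      have hmaps : Set.MapsTo f (ball z r) (closedBall (f z) (2 * M)) := fun w hw ↦ by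
        rw [mem_closedBall_iff_norm]
        linarith [norm_sub_le (f w) (f z), hM w (hsub z hz hw), hM z (hsub z hz (hself z))]
      calc ‖Δ_[h] f z‖ = dist (f (z + h)) (f z) := (dist_eq_norm _ _).symm
        _ ≤ 2 * M / r * dist (z + h) z :=
          Complex.dist_le_div_mul_dist_of_mapsTo_ball (hd.mono (hsub z hz)) hmaps (hstep z)
        _ = M * (2 * ‖h‖ / r) := by rw [dist_self_add_left]; ring
    rw [Function.iterate_succ_apply]
    exact (ih hd' hM').trans_eq (by ring)

end FiniteDifferences

section Antiperiodic

variable {G F : Type*} [AddCommGroup G] [MeasurableSpace G] [MeasurableAdd G]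
  [NormedAddCommGroup F] [NormedSpace ℂ F] {μ : Measure G} [μ.IsAddRightInvariant]
  {e : G → ℂ} {f : G → F} {h : G}

theorem integrable_antiperiodic_smul_comp_add (he : Function.Antiperiodic e h)
    (hf : Integrable (fun ξ ↦ e ξ • f ξ) μ) : Integrable (fun ξ ↦ e ξ • f (ξ + h)) μ := by
  simpa [he _] using (hf.comp_add_right h).neg

theorem integral_antiperiodic_smul_fwdDiff (he : Function.Antiperiodic e h)
    (hf : Integrable (fun ξ ↦ e ξ • f ξ) μ) :
    ∫ ξ, e ξ • Δ_[h] f ξ ∂μ = (-2 : ℂ) • ∫ ξ, e ξ • f ξ ∂μ := by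
  have hshift : ∫ ξ, e ξ • f (ξ + h) ∂μ = -∫ ξ, e ξ • f ξ ∂μ := by
    rw [← integral_add_right_eq_self (fun ξ ↦ e ξ • f ξ) h, ← integral_neg]
    simp only [he _, neg_smul, neg_neg]
  simp only [fwdDiff, smul_sub]
  rw [integral_sub (integrable_antiperiodic_smul_comp_add he hf) hf, hshift]
  module

theorem integral_antiperiodic_smul_fwdDiff_iter (he : Function.Antiperiodic e h)
    (hf : Integrable (fun ξ ↦ e ξ • f ξ) μ) (N : ℕ) :
    ∫ ξ, e ξ • (Δ_[h])^[N] f ξ ∂μ = (-2 : ℂ) ^ N • ∫ ξ, e ξ • f ξ ∂μ := by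
  induction N generalizing f with
  | zero => simp
  | succ N ih =>
    have hdiff : Integrable (fun ξ ↦ e ξ • Δ_[h] f ξ) μ := by
      simp only [fwdDiff, smul_sub]
      exact (integrable_antiperiodic_smul_comp_add he hf).sub hf
    rw [Function.iterate_succ_apply, ih hdiff, integral_antiperiodic_smul_fwdDiff he hf, smul_smul,
      pow_succ]

theorem norm_integral_antiperiodic_smul_le (he : Function.Antiperiodic e h)
    (hf : Integrable (fun ξ ↦ e ξ • f ξ) μ) (N : ℕ) :
    ‖∫ ξ, e ξ • f ξ ∂μ‖ ≤ ‖∫ ξ, e ξ • (Δ_[h])^[N] f ξ ∂μ‖ := by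
  rw [integral_antiperiodic_smul_fwdDiff_iter he hf, norm_smul, norm_pow, norm_neg,
    Complex.norm_ofNat]
  exact le_mul_of_one_le_left (norm_nonneg _) (one_le_pow₀ one_le_two)

end Antiperiodic

section ComplexEstimates

theorem norm_exp_sub_one_le_of_re_nonpos {z : ℂ} (hz : z.re ≤ 0) :
    ‖Complex.exp z - 1‖ ≤ 2 * ‖z‖ := by
  rcases le_or_gt ‖z‖ 1 with hle | hgt
  · exact Complex.norm_exp_sub_one_le hle
  · have hexp : ‖Complex.exp z‖ ≤ 1 := by rwa [Complex.norm_exp, Real.exp_le_one_iff]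
    have htri := norm_sub_le (Complex.exp z) 1
    rw [norm_one] at htri
    linarith

theorem eventually_nhds_one_cpow (a : ℂ) :
    ∀ᶠ w in 𝓝 (1 : ℂ), w ∈ Complex.slitPlane ∧ 0 < (w ^ a).re ∧ ‖w ^ a‖ < 2 := by
  have hcont : ContinuousAt (fun w : ℂ ↦ w ^ a) 1 :=
    continuousAt_cpow_const Complex.one_mem_slitPlane
  refine .and (Complex.isOpen_slitPlane.mem_nhds Complex.one_mem_slitPlane) (.and ?_ ?_)
  · exact (Complex.continuous_re.continuousAt.comp hcont).eventually_const_lt (by simp)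
  · exact hcont.norm.eventually_lt_const (by simp)

end ComplexEstimates

section HolomorphicExtension

variable {V : Type*} [NormedAddCommGroup V]

/-- The Fourier multiplier `e^{-t|ξ|^{2α}}` of the semigroup `e^{-t(-Δ)^α}`. -/
noncomputable def heatSymbol (α t : ℝ) (ξ : V) : ℂ :=
  Complex.exp (-(t : ℂ) * ((‖ξ‖ ^ (2 * α) : ℝ) : ℂ))

theorem norm_heatSymbol (α t : ℝ) (ξ : V) :
    ‖heatSymbol α t ξ‖ = Real.exp (-t * ‖ξ‖ ^ (2 * α)) := by
  rw [heatSymbol, ← Complex.ofReal_neg, ← Complex.ofReal_mul, Complex.norm_exp_ofReal]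

theorem norm_heatSymbol_sub_one_le (α : ℝ) {t : ℝ} (ht : 0 ≤ t) (ξ : V) :
    ‖heatSymbol α t ξ - 1‖ ≤ 2 * (t * ‖ξ‖ ^ (2 * α)) := by
  have hp : 0 ≤ t * ‖ξ‖ ^ (2 * α) := by positivity
  rw [heatSymbol, neg_mul, ← Complex.ofReal_mul]
  refine (norm_exp_sub_one_le_of_re_nonpos (by simpa using hp)).trans_eq ?_
  rw [norm_neg, Complex.norm_of_nonneg hp]

theorem continuous_heatSymbol {α : ℝ} (hα : 0 ≤ α) (t : ℝ) :
    Continuous (heatSymbol α t : V → ℂ) := by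
  have hpow : Continuous fun ξ : V ↦ ‖ξ‖ ^ (2 * α) :=
    continuous_norm.rpow_const fun _ ↦ .inr (by positivity)
  unfold heatSymbol
  fun_prop

variable [InnerProductSpace ℝ V]

/-- The polynomial in `z` which for `ξ ≠ 0` and real `z` equals `|ξ + z h|² / |ξ|²`; it extends the
squared norm along a real line to the complex domain. -/
noncomputable def normSqRatio (ξ h : V) (z : ℂ) : ℂ :=
  1 + (2 * z * (inner ℝ ξ h : ℝ) + z ^ 2 * (‖h‖ ^ 2 : ℝ)) / (‖ξ‖ ^ 2 : ℝ)

theorem normSqRatio_ofReal {ξ : V} (hξ : ξ ≠ 0) (h : V) (r : ℝ) :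
    normSqRatio ξ h r = ((‖ξ + r • h‖ ^ 2 / ‖ξ‖ ^ 2 : ℝ) : ℂ) := by
  have hξ' : (‖ξ‖ : ℂ) ≠ 0 := by exact_mod_cast norm_ne_zero_iff.mpr hξ
  rw [normSqRatio, norm_add_sq_real, real_inner_smul_right, norm_smul, mul_pow, Real.norm_eq_abs,
    sq_abs]
  push_cast
  field_simp
  ring

theorem norm_normSqRatio_sub_one_le {ξ h : V} (hξ : ξ ≠ 0) {z : ℂ} {ε : ℝ} (hε : ε ≤ 1)
    (hz : ‖z‖ * ‖h‖ ≤ ε * ‖ξ‖) : ‖normSqRatio ξ h z - 1‖ ≤ 3 * ε := by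
  have hξ' : 0 < ‖ξ‖ := norm_pos_iff.mpr hξ
  have hε0 : 0 ≤ ε := nonneg_of_mul_nonneg_left ((by positivity : 0 ≤ ‖z‖ * ‖h‖).trans hz) hξ'
  have hlin : ‖2 * z * (inner ℝ ξ h : ℝ)‖ ≤ 2 * (ε * ‖ξ‖ ^ 2) := calc
    ‖2 * z * (inner ℝ ξ h : ℝ)‖ = 2 * ‖z‖ * ‖inner ℝ ξ h‖ := by
      rw [norm_mul, norm_mul, Complex.norm_ofNat, Complex.norm_real]
    _ ≤ 2 * ‖z‖ * (‖ξ‖ * ‖h‖) := by gcongr; exact norm_inner_le_norm ξ h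
    _ = 2 * (‖z‖ * ‖h‖ * ‖ξ‖) := by ring
    _ ≤ 2 * (ε * ‖ξ‖ * ‖ξ‖) := by gcongr
    _ = 2 * (ε * ‖ξ‖ ^ 2) := by ring
  have hquad : ‖z ^ 2 * (‖h‖ ^ 2 : ℝ)‖ ≤ ε * ‖ξ‖ ^ 2 := calc
    ‖z ^ 2 * (‖h‖ ^ 2 : ℝ)‖ = (‖z‖ * ‖h‖) ^ 2 := by
      rw [norm_mul, norm_pow, Complex.norm_of_nonneg (by positivity), mul_pow]
    _ ≤ (ε * ‖ξ‖) ^ 2 := by gcongr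
    _ = ε * (ε * ‖ξ‖ ^ 2) := by ring
    _ ≤ ε * ‖ξ‖ ^ 2 := mul_le_of_le_one_left (by positivity) hε
  rw [normSqRatio, add_sub_cancel_left, norm_div, Complex.norm_of_nonneg (sq_nonneg _),
    div_le_iff₀ (by positivity)]
  linarith [norm_add_le (2 * z * (inner ℝ ξ h : ℝ)) (z ^ 2 * (‖h‖ ^ 2 : ℝ))]

/-- The complex extension of `r ↦ e^{-t|ξ + r h|^{2α}}` for `ξ ≠ 0`; it is holomorphic where the
ratio `normSqRatio ξ h` avoids the branch cut of the power function. -/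
noncomputable def heatSymbolLine (α t : ℝ) (ξ h : V) (z : ℂ) : ℂ :=
  Complex.exp (-((t * ‖ξ‖ ^ (2 * α) : ℝ) * normSqRatio ξ h z ^ (α : ℂ)))

theorem heatSymbolLine_ofReal (α t : ℝ) {ξ : V} (hξ : ξ ≠ 0) (h : V) (r : ℝ) :
    heatSymbolLine α t ξ h r = heatSymbol α t (ξ + r • h) := by
  have hpow : ‖ξ‖ ^ (2 * α) ≠ 0 := (Real.rpow_pos_of_pos (norm_pos_iff.mpr hξ) _).ne'
  rw [heatSymbolLine, heatSymbol, normSqRatio_ofReal hξ, ← Complex.ofReal_cpow (by positivity),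
    Real.div_rpow (by positivity) (by positivity), ← Real.rpow_natCast_mul (norm_nonneg _),
    ← Real.rpow_natCast_mul (norm_nonneg _), Nat.cast_ofNat, neg_mul, ← Complex.ofReal_mul,
    ← Complex.ofReal_mul, mul_assoc, mul_div_cancel₀ _ hpow]

theorem exists_heatSymbolLine_differentiableAt_and_norm_sub_one_le (α : ℝ) :
    ∃ ε : ℝ, 0 < ε ∧ ε ≤ 1 ∧ ∀ t : ℝ, 0 ≤ t → ∀ (ξ h : V) (z : ℂ), ξ ≠ 0 → ‖z‖ * ‖h‖ ≤ ε * ‖ξ‖ →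
      DifferentiableAt ℂ (heatSymbolLine α t ξ h) z ∧
        ‖heatSymbolLine α t ξ h z - 1‖ ≤ 4 * (t * ‖ξ‖ ^ (2 * α)) := by
  obtain ⟨δ, hδ, hball⟩ := Metric.eventually_nhds_iff.mp (eventually_nhds_one_cpow (α : ℂ))
  refine ⟨min (δ / 4) 1, by positivity, min_le_right _ _, fun t ht ξ h z hξ hz ↦ ?_⟩
  have hclose : dist (normSqRatio ξ h z) 1 < δ := by
    rw [dist_eq_norm]
    linarith [norm_normSqRatio_sub_one_le hξ (min_le_right _ _) hz, min_le_left (δ / 4) 1]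
  obtain ⟨hslit, hre, hnorm⟩ := hball hclose
  have hp : 0 ≤ t * ‖ξ‖ ^ (2 * α) := by positivity
  constructor
  · have hratio : DifferentiableAt ℂ (normSqRatio ξ h) z := by unfold normSqRatio; fun_prop
    exact ((hratio.cpow_const hslit).const_mul _).neg.cexp
  · refine (norm_exp_sub_one_le_of_re_nonpos ?_).trans ?_
    · rw [Complex.neg_re, Complex.re_ofReal_mul, neg_nonpos]
      exact mul_nonneg hp hre.le
    · rw [norm_neg, norm_mul, Complex.norm_of_nonneg hp]
      linarith [mul_le_mul_of_nonneg_left hnorm.le hp]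

end HolomorphicExtension

section SymbolDifferences

variable {V : Type*} [NormedAddCommGroup V]

theorem norm_fwdDiff_iter_heatSymbol_le {α t : ℝ} (hα : 0 ≤ α) (ht : 0 ≤ t) {N : ℕ} (hN : N ≠ 0)
    {h : V} (hh : ‖h‖ ≤ 1) (ξ : V) :
    ‖(Δ_[h])^[N] (heatSymbol α t) ξ‖ ≤ 2 ^ N * (2 * (t * (‖ξ‖ + N) ^ (2 * α))) := by
  rw [← fwdDiff_iter_sub_const h _ 1 hN]
  refine norm_fwdDiff_iter_le fun k hk ↦ (norm_heatSymbol_sub_one_le α ht _).trans ?_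
  have hshift : ‖ξ + k • h‖ ≤ ‖ξ‖ + N := calc
    ‖ξ + k • h‖ ≤ ‖ξ‖ + k * ‖h‖ := (norm_add_le _ _).trans (by gcongr; exact norm_nsmul_le)
    _ ≤ ‖ξ‖ + N * 1 := by gcongr
    _ = ‖ξ‖ + N := by rw [mul_one]
  gcongr

theorem norm_fwdDiff_iter_heatSymbol_le_of_norm_le {α t R : ℝ} (hα : 0 ≤ α) (ht : 0 ≤ t) {N : ℕ}
    (hN : N ≠ 0) {h ξ : V} (hh : ‖h‖ ≤ 1) (hξ : ‖ξ‖ ≤ R) :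
    ‖(Δ_[h])^[N] (heatSymbol α t) ξ‖ ≤
      2 ^ N * 2 * (N + 1) ^ (2 * α) * (1 + R) ^ N * t * (1 + ‖ξ‖) ^ (2 * α - N) := calc
  ‖(Δ_[h])^[N] (heatSymbol α t) ξ‖
    ≤ 2 ^ N * (2 * (t * (‖ξ‖ + N) ^ (2 * α))) := norm_fwdDiff_iter_heatSymbol_le hα ht hN hh ξ
  _ ≤ 2 ^ N * (2 * (t * ((N + 1) * (1 + ‖ξ‖)) ^ (2 * α))) := by
    gcongr
    nlinarith [norm_nonneg ξ, N.cast_nonneg (α := ℝ)]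
  _ = 2 ^ N * 2 * (N + 1) ^ (2 * α) * t * (1 + ‖ξ‖) ^ (2 * α) * 1 := by
    rw [Real.mul_rpow (by positivity) (by positivity)]
    ring
  _ ≤ 2 ^ N * 2 * (N + 1) ^ (2 * α) * t * (1 + ‖ξ‖) ^ (2 * α) * ((1 + R) / (1 + ‖ξ‖)) ^ N := by
    gcongr
    exact one_le_pow₀ ((one_le_div (by positivity)).mpr (by linarith))
  _ = 2 ^ N * 2 * (N + 1) ^ (2 * α) * (1 + R) ^ N * t * (1 + ‖ξ‖) ^ (2 * α - N) := by
    rw [Real.rpow_sub_natCast (by positivity), div_pow]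
    ring

variable [InnerProductSpace ℝ V]

theorem exists_norm_fwdDiff_iter_heatSymbol_le_of_lt_norm (α : ℝ) {N : ℕ} (hN : N ≠ 0) :
    ∃ R : ℝ, 1 ≤ R ∧ ∀ t : ℝ, 0 ≤ t → ∀ h : V, ‖h‖ ≤ 1 → ∀ ξ : V, R < ‖ξ‖ →
      ‖(Δ_[h])^[N] (heatSymbol α t) ξ‖ ≤ 4 * (t * ‖ξ‖ ^ (2 * α)) * (2 * R / ‖ξ‖) ^ N := by
  obtain ⟨ε, hε, hε1, hline⟩ :=
    exists_heatSymbolLine_differentiableAt_and_norm_sub_one_le (V := V) α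
  have hR : 1 ≤ (N + 1) / ε := by
    rw [one_le_div hε]
    linarith [N.cast_nonneg (α := ℝ)]
  refine ⟨(N + 1) / ε, hR, fun t ht h hh ξ hξ ↦ ?_⟩
  have hξ0 : 0 < ‖ξ‖ := by linarith
  have hξne : ξ ≠ 0 := norm_pos_iff.mp hξ0
  set r : ℝ := ‖ξ‖ / ((N + 1) / ε) with hr
  have hball : ∀ z ∈ ball (0 : ℂ) ((N + 1) * r), ‖z‖ * ‖h‖ ≤ ε * ‖ξ‖ := by
    have hradius : (N + 1) * r = ε * ‖ξ‖ := by rw [hr]; field_simp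
    intro z hz
    rw [mem_ball_zero_iff, hradius] at hz
    exact (mul_le_of_le_one_right (norm_nonneg z) hh).trans hz.le
  have hstep : ‖(1 : ℂ)‖ < r := by rwa [norm_one, one_lt_div (by positivity)]
  have hline_sub_one : (Δ_[h])^[N] (heatSymbol α t) ξ =
      (Δ_[(1 : ℂ)])^[N] (fun z ↦ heatSymbolLine α t ξ h z - 1) 0 := by
    rw [fwdDiff_iter_sub_const _ _ _ hN]
    refine fwdDiff_iter_eq_of_forall_le fun k _ ↦ ?_
    rw [← Nat.cast_smul_eq_nsmul ℝ k h, ← heatSymbolLine_ofReal α t hξne, zero_add, nsmul_one,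
      Complex.ofReal_natCast]
  calc ‖(Δ_[h])^[N] (heatSymbol α t) ξ‖
      = ‖(Δ_[(1 : ℂ)])^[N] (fun z ↦ heatSymbolLine α t ξ h z - 1) 0‖ := by rw [hline_sub_one]
    _ ≤ 4 * (t * ‖ξ‖ ^ (2 * α)) * (2 * ‖(1 : ℂ)‖ / r) ^ N :=
      norm_fwdDiff_iter_le_of_differentiableOn_ball hstep
        (fun z hz ↦ ((hline t ht ξ h z hξne (hball z hz)).1.sub_const 1).differentiableWithinAt)
        fun z hz ↦ (hline t ht ξ h z hξne (hball z hz)).2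
    _ = 4 * (t * ‖ξ‖ ^ (2 * α)) * (2 * ((N + 1) / ε) / ‖ξ‖) ^ N := by
      rw [norm_one, mul_one, div_div_eq_mul_div]

theorem exists_norm_fwdDiff_iter_heatSymbol_le {α : ℝ} (hα : 0 ≤ α) {N : ℕ} (hN : N ≠ 0) :
    ∃ C : ℝ, 0 ≤ C ∧ ∀ t : ℝ, 0 ≤ t → ∀ h : V, ‖h‖ ≤ 1 → ∀ ξ : V,
      ‖(Δ_[h])^[N] (heatSymbol α t) ξ‖ ≤ C * t * (1 + ‖ξ‖) ^ (2 * α - N) := by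
  obtain ⟨R, hR, hfar⟩ := exists_norm_fwdDiff_iter_heatSymbol_le_of_lt_norm (V := V) α hN
  set Cnear : ℝ := 2 ^ N * 2 * (N + 1) ^ (2 * α) * (1 + R) ^ N
  set Cfar : ℝ := 4 * (4 * R) ^ N
  refine ⟨max Cnear Cfar, by positivity, fun t ht h hh ξ ↦ ?_⟩
  rcases le_or_gt ‖ξ‖ R with hle | hlt
  · refine (norm_fwdDiff_iter_heatSymbol_le_of_norm_le hα ht hN hh hle).trans ?_
    gcongr
    exact le_max_left _ _
  · have hinv : 2 * R / ‖ξ‖ ≤ 4 * R / (1 + ‖ξ‖) := by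
      rw [div_le_div_iff₀ (by linarith) (by positivity)]
      nlinarith
    calc ‖(Δ_[h])^[N] (heatSymbol α t) ξ‖
        ≤ 4 * (t * ‖ξ‖ ^ (2 * α)) * (2 * R / ‖ξ‖) ^ N := hfar t ht h hh ξ hlt
      _ ≤ 4 * (t * (1 + ‖ξ‖) ^ (2 * α)) * (4 * R / (1 + ‖ξ‖)) ^ N := by
        gcongr
        linarith
      _ = Cfar * t * (1 + ‖ξ‖) ^ (2 * α - N) := by
        rw [Real.rpow_sub_natCast (by positivity), div_pow]
        ring
      _ ≤ max Cnear Cfar * t * (1 + ‖ξ‖) ^ (2 * α - N) := by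
        gcongr
        exact le_max_right _ _

end SymbolDifferences

section HeatIntegral

variable {V : Type*} [NormedAddCommGroup V] [InnerProductSpace ℝ V]

/-- The plane wave `ξ ↦ e^{i x·ξ}`, the oscillating factor of the Fourier integral at `x`. -/
noncomputable def planeWave (x ξ : V) : ℂ :=
  Complex.exp (Complex.I * ((inner ℝ x ξ : ℝ) : ℂ))

theorem norm_planeWave (x ξ : V) : ‖planeWave x ξ‖ = 1 := by
  rw [planeWave, mul_comm, Complex.norm_exp_ofReal_mul_I]

theorem continuous_planeWave (x : V) : Continuous (planeWave x) := by
  unfold planeWave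
  fun_prop

theorem planeWave_antiperiodic {x h : V} (hxh : inner ℝ x h = π) :
    Function.Antiperiodic (planeWave x) h := by
  intro ξ
  rw [planeWave, inner_add_right, hxh, Complex.ofReal_add, mul_add, Complex.exp_add,
    mul_comm Complex.I (π : ℂ), Complex.exp_pi_mul_I, mul_neg_one, planeWave]

variable [FiniteDimensional ℝ V] [MeasurableSpace V] [BorelSpace V]

/-- The heat kernel `∫ e^{i x·ξ} e^{-t|ξ|^{2α}} dξ` of a Euclidean space, without the factor
`(2π)^{-n}` of `K0`. -/
noncomputable def heatIntegral (α t : ℝ) (x : V) : ℂ :=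
  ∫ ξ, planeWave x ξ * heatSymbol α t ξ

theorem integrable_heatSymbol {α t : ℝ} (hα : 0 < α) (ht : 0 < t) :
    Integrable (heatSymbol α t : V → ℂ) := by
  rw [← integrable_norm_iff (continuous_heatSymbol hα.le t).aestronglyMeasurable]
  simp only [norm_heatSymbol]
  cases subsingleton_or_nontrivial V
  · exact .of_subsingleton
  · rw [integrable_fun_norm_addHaar volume (f := fun r ↦ Real.exp (-t * r ^ (2 * α)))]
    simpa only [Real.rpow_natCast, smul_eq_mul] using
      integrableOn_rpow_mul_exp_neg_mul_rpow (s := (finrank ℝ V - 1 : ℕ))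
        (neg_one_lt_zero.trans_le (Nat.cast_nonneg _)) (by positivity) ht

theorem integrable_planeWave_mul_heatSymbol {α t : ℝ} (hα : 0 < α) (ht : 0 < t) (x : V) :
    Integrable fun ξ ↦ planeWave x ξ * heatSymbol α t ξ :=
  (integrable_heatSymbol hα ht).bdd_mul (continuous_planeWave x).aestronglyMeasurable
    (.of_forall fun ξ ↦ (norm_planeWave x ξ).le)

theorem norm_heatIntegral_le (α t : ℝ) (x : V) :
    ‖heatIntegral α t x‖ ≤ ∫ ξ : V, ‖heatSymbol α t ξ‖ := by
  refine (norm_integral_le_integral_norm _).trans_eq ?_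
  simp only [norm_mul, norm_planeWave, one_mul]

theorem heatIntegral_eq_pow_mul {s : ℝ} (hs : 0 < s) (α t : ℝ) (x : V) :
    heatIntegral α t x = s ^ finrank ℝ V * heatIntegral α (s ^ (2 * α) * t) (s • x) := by
  have hwave (ξ : V) : planeWave (s • x) ξ = planeWave x (s • ξ) := by
    rw [planeWave, planeWave, real_inner_smul_left, real_inner_smul_right]
  have hsymbol (ξ : V) : heatSymbol α (s ^ (2 * α) * t) ξ = heatSymbol α t (s • ξ) := by
    rw [heatSymbol, heatSymbol, norm_smul, Real.norm_of_nonneg hs.le,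
      Real.mul_rpow hs.le (norm_nonneg ξ)]
    push_cast
    ring_nf
  simp only [heatIntegral, hwave, hsymbol]
  rw [Measure.integral_comp_smul_of_nonneg volume
      (fun ξ ↦ planeWave x ξ * heatSymbol α t ξ) s (hR := hs.le),
    Complex.real_smul, Complex.ofReal_inv, Complex.ofReal_pow, mul_inv_cancel_left₀]
  exact pow_ne_zero _ (by exact_mod_cast hs.ne')

theorem exists_norm_heatIntegral_le_of_norm_eq_pi {α : ℝ} (hα : 0 < α) :
    ∃ C : ℝ, 0 ≤ C ∧ ∀ t : ℝ, 0 < t → ∀ x : V, ‖x‖ = π → ‖heatIntegral α t x‖ ≤ C * t := by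
  obtain ⟨N, hN⟩ := exists_nat_gt ((finrank ℝ V : ℝ) + 2 * α)
  have hN0 : N ≠ 0 := by
    rintro rfl
    have hpos : (0 : ℝ) < finrank ℝ V + 2 * α := by positivity
    exact hpos.not_gt (by exact_mod_cast hN)
  obtain ⟨C, hC, hdiff⟩ := exists_norm_fwdDiff_iter_heatSymbol_le (V := V) hα.le hN0
  have hweight : Integrable fun ξ : V ↦ (1 + ‖ξ‖) ^ (2 * α - N) := by
    simpa only [neg_sub] using
      integrable_one_add_norm (μ := (volume : Measure V)) (r := N - 2 * α) (by linarith)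
  refine ⟨C * ∫ ξ : V, (1 + ‖ξ‖) ^ (2 * α - N), by positivity, fun t ht x hx ↦ ?_⟩
  have hstep : inner ℝ x (π⁻¹ • x) = π := by
    rw [real_inner_smul_right, real_inner_self_eq_norm_sq, hx]
    field_simp
  have hunit : ‖π⁻¹ • x‖ ≤ 1 := by
    rw [norm_smul, norm_inv, Real.norm_of_nonneg pi_nonneg, hx, inv_mul_cancel₀ pi_ne_zero]
  calc ‖heatIntegral α t x‖
      ≤ ‖∫ ξ, planeWave x ξ • (Δ_[π⁻¹ • x])^[N] (heatSymbol α t) ξ‖ :=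
        norm_integral_antiperiodic_smul_le (planeWave_antiperiodic hstep)
          (integrable_planeWave_mul_heatSymbol hα ht x) N
    _ ≤ ∫ ξ : V, C * t * (1 + ‖ξ‖) ^ (2 * α - N) := by
        refine norm_integral_le_of_norm_le (hweight.const_mul _) (.of_forall fun ξ ↦ ?_)
        rw [norm_smul, norm_planeWave, one_mul]
        exact hdiff t ht.le _ hunit ξ
    _ = C * (∫ ξ : V, (1 + ‖ξ‖) ^ (2 * α - N)) * t := by
        rw [integral_const_mul]
        ring

theorem exists_norm_heatIntegral_le_mul_norm_rpow {α : ℝ} (hα : 0 < α) :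
    ∃ C : ℝ, 0 ≤ C ∧ ∀ t : ℝ, 0 < t → ∀ x : V, x ≠ 0 →
      ‖heatIntegral α t x‖ ≤ C * (t * ‖x‖ ^ (-((finrank ℝ V : ℝ) + 2 * α))) := by
  obtain ⟨C, hC, hsphere⟩ := exists_norm_heatIntegral_le_of_norm_eq_pi (V := V) hα
  refine ⟨C * π ^ ((finrank ℝ V : ℝ) + 2 * α), by positivity, fun t ht x hx ↦ ?_⟩
  have hx0 : 0 < ‖x‖ := norm_pos_iff.mpr hx
  have hs : 0 < π / ‖x‖ := by positivity
  have hnorm : ‖(π / ‖x‖) • x‖ = π := by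
    rw [norm_smul, Real.norm_of_nonneg hs.le, div_mul_cancel₀ _ hx0.ne']
  have hpow : (π / ‖x‖) ^ finrank ℝ V * (π / ‖x‖) ^ (2 * α) =
      π ^ ((finrank ℝ V : ℝ) + 2 * α) * ‖x‖ ^ (-((finrank ℝ V : ℝ) + 2 * α)) := by
    rw [← Real.rpow_natCast, ← Real.rpow_add hs, Real.div_rpow pi_nonneg hx0.le,
      Real.rpow_neg hx0.le, div_eq_mul_inv]
  calc ‖heatIntegral α t x‖
      = (π / ‖x‖) ^ finrank ℝ V *
          ‖heatIntegral α ((π / ‖x‖) ^ (2 * α) * t) ((π / ‖x‖) • x)‖ := by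
        rw [heatIntegral_eq_pow_mul hs, norm_mul, norm_pow, Complex.norm_of_nonneg hs.le]
    _ ≤ (π / ‖x‖) ^ finrank ℝ V * (C * ((π / ‖x‖) ^ (2 * α) * t)) := by
        gcongr
        exact hsphere _ (by positivity) _ hnorm
    _ = C * t * ((π / ‖x‖) ^ finrank ℝ V * (π / ‖x‖) ^ (2 * α)) := by ring
    _ = C * π ^ ((finrank ℝ V : ℝ) + 2 * α) *
          (t * ‖x‖ ^ (-((finrank ℝ V : ℝ) + 2 * α))) := by
        rw [hpow]
        ring

theorem norm_heatIntegral_le_mul_rpow {α t : ℝ} (hα : 0 < α) (ht : 0 < t) (x : V) :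
    ‖heatIntegral α t x‖ ≤
      (∫ ξ : V, ‖heatSymbol α 1 ξ‖) * t ^ (-(finrank ℝ V : ℝ) / (2 * α)) := by
  have hs : 0 < t ^ (-1 / (2 * α)) := by positivity
  have htime : (t ^ (-1 / (2 * α))) ^ (2 * α) * t = 1 := by
    rw [← Real.rpow_mul ht.le, div_mul_cancel₀ _ (by positivity), Real.rpow_neg_one,
      inv_mul_cancel₀ ht.ne']
  have hpow : (t ^ (-1 / (2 * α))) ^ finrank ℝ V = t ^ (-(finrank ℝ V : ℝ) / (2 * α)) := by
    rw [← Real.rpow_mul_natCast ht.le]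
    ring_nf
  rw [heatIntegral_eq_pow_mul hs, htime, norm_mul, norm_pow, Complex.norm_of_nonneg hs.le, hpow,
    mul_comm]
  gcongr
  exact norm_heatIntegral_le α 1 _

end HeatIntegral

theorem norm_K0 (n : ℕ) (α t : ℝ) (x : EuclideanSpace ℝ (Fin n)) :
    ‖K0 n α t x‖ = (2 * π) ^ (-(n : ℝ)) * ‖heatIntegral α t x‖ := by
  have hK : K0 n α t x = ((2 * π) ^ (-(n : ℝ)) : ℝ) • heatIntegral α t x := rfl
  rw [hK, norm_smul, Real.norm_of_nonneg (by positivity)]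

theorem free_fractional_kernel_bound_general (n : ℕ) {α : ℝ} (hα : 0 < α) :
    ∃ C₁ > (0 : ℝ), ∀ t : ℝ, 0 < t → ∀ x : EuclideanSpace ℝ (Fin n),
      ‖K0 n α t x‖ ≤ C₁ * Ifun n α t x := by
  obtain ⟨C, hC, hspace⟩ :=
    exists_norm_heatIntegral_le_mul_norm_rpow (V := EuclideanSpace ℝ (Fin n)) hα
  set J := ∫ ξ : EuclideanSpace ℝ (Fin n), ‖heatSymbol α 1 ξ‖
  have hJ : 0 ≤ J := integral_nonneg fun _ ↦ norm_nonneg _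
  refine ⟨(2 * π) ^ (-(n : ℝ)) * (C + J + 1), by positivity, fun t ht x ↦ ?_⟩
  have htime : ‖heatIntegral α t x‖ ≤ (C + J + 1) * t ^ (-(n : ℝ) / (2 * α)) := by
    refine (norm_heatIntegral_le_mul_rpow hα ht x).trans ?_
    rw [finrank_euclideanSpace_fin]
    gcongr
    linarith
  rw [norm_K0, mul_assoc, Ifun]
  gcongr
  split_ifs with hx
  · exact htime
  · rw [mul_min_of_nonneg _ _ (by positivity)]
    refine le_min ((hspace t ht x hx).trans ?_) htime
    rw [finrank_euclideanSpace_fin]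
    gcongr
    linarith

/-- for non-integer `α > 0` there is `C₁ > 0` such that
`|K₀(t,x)| ≤ C₁ min( t·|x|^{-(n+2α)}, t^{-n/(2α)} )` for all `t > 0`, `x ≠ 0`. -/
theorem free_fractional_kernel_bound (n : ℕ) (hn : 1 ≤ n) (α : ℝ) (hα : 0 < α)
    (hαnotint : ∀ k : ℕ, α ≠ k) :
    ∃ C₁ > (0 : ℝ), ∀ t : ℝ, 0 < t → ∀ x : EuclideanSpace ℝ (Fin n), x ≠ 0 →
      ‖K0 n α t x‖ ≤ C₁ * Ifun n α t x := by
  obtain ⟨C₁, hC₁, hbound⟩ := free_fractional_kernel_bound_general n hα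
  exact ⟨C₁, hC₁, fun t ht x _ ↦ hbound t ht x⟩
end
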